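/- arXiv:2501.13980 — 2 statements merged into one kernel-verified Lean document; each statement's English description precedes it below -/
import Mathlib

section
/- Let n ≥ 8 and let G be a connected locally nonforesty graph of order n whose size is minimum among all connected locally nonforesty graphs of order n. Then every block of G has order at most 6. -/
/-- A graph `G` is locally nonforesty if for every vertex `v`, the subgraph induced by
the neighborhood of `v` contains a cycle (i.e., is not acyclic). -/
def LocallyNonforesty {V : Type*} (G : SimpleGraph V) : Prop :=
  ∀ v : V, ¬ (G.induce (G.neighborSet v)).IsAcyclic

/-- A vertex set `B` induces a block of `G`: the induced subgraph `G[B]` is connected,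
has no cut vertex, and `B` is maximal with these properties.  (A block of a graph is a
maximal connected subgraph without a cut vertex; such a subgraph is always induced.) -/
def IsBlock {V : Type*} (G : SimpleGraph V) (B : Set V) : Prop :=
  (G.induce B).Connected ∧
    (∀ v ∈ B, (G.induce (B \ {v})).Preconnected) ∧
    ∀ C : Set V, B ⊆ C → (G.induce C).Connected →
      (∀ v ∈ C, (G.induce (C \ {v})).Preconnected) → C = B

open SimpleGraph Classical

namespace Foresty

/-- `Nu F k`: the cyclomatic number of `F` is at least `k`. -/
def Nu {V : Type*} (F : SimpleGraph V) (k : ℕ) : Prop :=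
  ∃ H : SimpleGraph V, H ≤ F ∧ (∀ x y, F.Adj x y → H.Reachable x y) ∧
    H.edgeSet.ncard + k ≤ F.edgeSet.ncard

lemma reach_of_adj {V : Type*} {F H : SimpleGraph V}
    (h : ∀ x y, F.Adj x y → H.Reachable x y) {x y : V} (hr : F.Reachable x y) :
    H.Reachable x y := by
  obtain ⟨p⟩ := hr
  induction p with
  | nil => exact Reachable.refl _
  | cons hadj _ ih => exact (h _ _ hadj).trans ih

lemma nu_bot {V : Type*} : Nu (⊥ : SimpleGraph V) 0 :=
  ⟨⊥, le_rfl, fun _ _ h => h.elim, by simp⟩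

lemma nu_le {V : Type*} {F : SimpleGraph V} {k l : ℕ} (h : Nu F k) (hl : l ≤ k) : Nu F l := by
  obtain ⟨H, h1, h2, h3⟩ := h
  exact ⟨H, h1, h2, by omega⟩

lemma nu_mono {V : Type*} [Fintype V] {F F' : SimpleGraph V} {k : ℕ} (hF : F ≤ F') (h : Nu F k) :
    Nu F' k := by
  obtain ⟨H, h1, h2, h3⟩ := h
  refine ⟨H ⊔ (F' \ F), sup_le (h1.trans hF) sdiff_le, fun x y hxy => ?_, ?_⟩
  · by_cases hf : F.Adj x y
    · exact (h2 x y hf).mono le_sup_left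
    · exact Adj.reachable (Or.inr ⟨hxy, hf⟩)
  · rw [edgeSet_sup, edgeSet_sdiff]
    have h4 := Set.ncard_union_le H.edgeSet (F'.edgeSet \ F.edgeSet)
    have h5 := Set.ncard_sdiff_add_ncard_of_subset (edgeSet_mono hF) (Set.toFinite _)
    omega

lemma nu_edge {V : Type*} [Fintype V] {F : SimpleGraph V} {k : ℕ} {u w : V} (hr : F.Reachable u w)
    (hn : ¬ F.Adj u w) (hne : u ≠ w) (h : Nu F k) : Nu (F ⊔ edge u w) (k + 1) := by
  obtain ⟨H, h1, h2, h3⟩ := h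
  refine ⟨H, h1.trans le_sup_left, fun x y hxy => ?_, ?_⟩
  · rcases hxy with hxy | hxy
    · exact h2 x y hxy
    · rw [edge_adj] at hxy
      have := reach_of_adj h2 hr
      rcases hxy with ⟨⟨rfl, rfl⟩ | ⟨rfl, rfl⟩, _⟩
      · exact this
      · exact this.symm
  · rw [edgeSet_sup, edgeSet_edge_of_ne hne, Set.union_singleton,
      Set.ncard_insert_of_notMem (by simpa using hn) (Set.toFinite _)]
    omega

/-- removing a non-bridge -/
lemma nu_del {V : Type*} [Fintype V] {G : SimpleGraph V} {k : ℕ} {u w : V} (hG : G.Adj u w)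
    (hr : (G.deleteEdges {s(u, w)}).Reachable u w)
    (h : Nu (G.deleteEdges {s(u, w)}) k) : Nu G (k + 1) := by
  have := nu_edge hr (by simp) hG.ne h
  refine nu_mono ?_ this
  refine sup_le (deleteEdges_le _) ?_
  intro a b hab
  rw [edge_adj] at hab
  rcases hab with ⟨⟨rfl, rfl⟩ | ⟨rfl, rfl⟩, _⟩
  · exact hG
  · exact hG.symm

lemma nu_connected {V : Type*} [Fintype V] {G : SimpleGraph V} {k : ℕ} (hG : G.Connected)
    (h : Nu G k) : Fintype.card V + k ≤ G.edgeSet.ncard + 1 := by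
  obtain ⟨H, h1, h2, h3⟩ := h
  have hH : H.Connected := by
    have := hG.nonempty
    exact ⟨fun x y => reach_of_adj h2 (hG.preconnected x y)⟩
  have := hH.card_vert_le_card_edgeSet_add_one
  rw [Nat.card_eq_fintype_card] at this
  have h5 : Nat.card H.edgeSet = H.edgeSet.ncard := rfl
  omega

/-- star with center `v` and leaves `N` -/
def star {V : Type*} (v : V) (N : Finset V) : SimpleGraph V :=
  SimpleGraph.fromRel (fun x y => x = v ∧ y ∈ N)

lemma star_adj {V : Type*} {v : V} {N : Finset V} {x y : V} :
    (star v N).Adj x y ↔ x ≠ y ∧ ((x = v ∧ y ∈ N) ∨ (y = v ∧ x ∈ N)) := by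
  simp [star]

lemma nu_star {V : Type*} [Fintype V] {F : SimpleGraph V} {k : ℕ} {v : V} (N : Finset V)
    (hr : ∀ a ∈ N, ∀ b ∈ N, F.Reachable a b) (hv : v ∉ N) (hn : ∀ a ∈ N, ¬ F.Adj v a)
    (h : Nu F k) : Nu (F ⊔ star v N) (k + (N.card - 1)) := by
  induction N using Finset.induction_on with
  | empty => exact nu_mono le_sup_left (by simpa using h)
  | insert a N ha ih =>
    rcases N.eq_empty_or_nonempty with rfl | ⟨b, hb⟩
    · exact nu_mono le_sup_left (by simpa using h)
    have ih' := ih (fun x hx y hy => hr x (by simp [hx]) y (by simp [hy]))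
      (fun h => hv (by simp [h])) (fun x hx => hn x (by simp [hx]))
    have hva : v ≠ a := fun h => hv (by simp [h])
    have hvb : v ≠ b := fun h => hv (by simp [h, hb])
    have h1 : (F ⊔ star v N).Reachable v a := by
      have h2 : (F ⊔ star v N).Adj v b := Or.inr (star_adj.2 ⟨hvb, by simp [hb]⟩)
      exact h2.reachable.trans ((hr b (by simp [hb]) a (by simp)).mono le_sup_left)
    have h3 : ¬ (F ⊔ star v N).Adj v a := by
      rintro (h | h)
      · exact hn a (by simp) h
      · rw [star_adj] at h
        rcases h with ⟨_, h | h⟩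
        · exact ha h.2
        · exact hva h.1.symm
    have h4 := nu_edge h1 h3 hva ih'
    have hc : 0 < N.card := Finset.card_pos.2 ⟨b, hb⟩
    rw [Finset.card_insert_of_notMem ha]
    refine nu_mono ?_ (nu_le h4 (by omega))
    refine sup_le (sup_le le_sup_left (le_trans ?_ le_sup_right)) (le_trans ?_ le_sup_right)
    · intro x y
      simp only [star_adj, Finset.mem_insert]
      tauto
    · intro x y
      simp only [star_adj, Finset.mem_insert, edge_adj]
      tauto

/-- `C` is the rim of a wheel in `G` with hub `v`, on the vertex set `N`. -/
structure Rim {V : Type*} (G : SimpleGraph V) (v : V) (C : SimpleGraph V) (N : Finset V) :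
    Prop where
  le : C ≤ G
  spoke : ∀ w ∈ N, G.Adj v w
  mem : ∀ x y, C.Adj x y → x ∈ N
  conn : ∀ x ∈ N, ∀ y ∈ N, C.Reachable x y
  nb : ∀ x y, C.Adj x y → (C.deleteEdges {s(x, y)}).Reachable x y
  deg : ∀ w ∈ N, (C.neighborSet w).ncard = 2
  ne : N.Nonempty

lemma Rim.two {V : Type*} {G : SimpleGraph V} {v : V} {C : SimpleGraph V} {N : Finset V}
    (h : Rim G v C N) {w : V} (hw : w ∈ N) :
    ∃ a b, a ≠ b ∧ C.Adj w a ∧ C.Adj w b ∧ ∀ c, C.Adj w c → c = a ∨ c = b := by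
  obtain ⟨a, b, hab, hs⟩ := Set.ncard_eq_two.1 (h.deg w hw)
  have hm : ∀ c, C.Adj w c ↔ c = a ∨ c = b := fun c => by
    rw [← mem_neighborSet, hs]; simp
  exact ⟨a, b, hab, (hm a).2 (Or.inl rfl), (hm b).2 (Or.inr rfl), fun c hc => (hm c).1 hc⟩

lemma Rim.hub {V : Type*} {G : SimpleGraph V} {v : V} {C : SimpleGraph V} {N : Finset V}
    (h : Rim G v C N) : v ∉ N := fun hv => (h.spoke v hv).ne rfl

lemma Rim.star_le {V : Type*} {G : SimpleGraph V} {v : V} {C : SimpleGraph V} {N : Finset V}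
    (h : Rim G v C N) : star v N ≤ G := by
  intro x y hxy
  rw [star_adj] at hxy
  rcases hxy with ⟨_, ⟨rfl, hy⟩ | ⟨rfl, hy⟩⟩
  · exact h.spoke _ hy
  · exact (h.spoke _ hy).symm

lemma nu_rim {V : Type*} [Fintype V] {G : SimpleGraph V} {v : V} {C : SimpleGraph V} {N : Finset V}
    (h : Rim G v C N) {F : SimpleGraph V} {k : ℕ} {x y : V} (hxy : C.Adj x y) (hF : ¬ F.Adj x y)
    (hk : Nu F k) : Nu (F ⊔ C) (k + 1) := by
  have h1 : (F ⊔ C.deleteEdges {s(x, y)}).Reachable x y := (h.nb x y hxy).mono le_sup_right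
  have h2 : ¬ (F ⊔ C.deleteEdges {s(x, y)}).Adj x y := by
    rintro (h | h)
    · exact hF h
    · simp at h
  refine nu_mono ?_ (nu_edge h1 h2 hxy.ne (nu_mono le_sup_left hk))
  refine sup_le (sup_le_sup le_rfl (deleteEdges_le _)) (le_trans ?_ le_sup_right)
  intro a b hab
  rw [edge_adj] at hab
  rcases hab with ⟨⟨rfl, rfl⟩ | ⟨rfl, rfl⟩, _⟩
  · exact hxy
  · exact hxy.symm

lemma wheel_step {V : Type*} [Fintype V] {G : SimpleGraph V} {v : V} {C : SimpleGraph V}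
    {N U : Finset V} (h : Rim G v C N) {F : SimpleGraph V} {k : ℕ}
    (hU : ∀ x y, F.Adj x y → x ∈ U) (hv : v ∉ U) (hk : Nu F k) :
    Nu (F ⊔ C ⊔ star v N) (k + (N.card - 1)) ∧
      (¬ N ⊆ U → Nu (F ⊔ C ⊔ star v N) (k + N.card)) := by
  have hpos : 0 < N.card := Finset.card_pos.2 h.ne
  have h1 : ∀ l, Nu (F ⊔ C) l → Nu (F ⊔ C ⊔ star v N) (l + (N.card - 1)) := fun l hl => by
    refine nu_star N (fun a ha b hb => (h.conn a ha b hb).mono le_sup_right) h.hub ?_ hl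
    rintro a ha (h' | h')
    · exact hv (hU _ _ h')
    · exact h.hub (h.mem _ _ h')
  refine ⟨h1 k (nu_mono le_sup_left hk), fun hN => ?_⟩
  obtain ⟨w, hw, hwU⟩ := Finset.not_subset.1 hN
  obtain ⟨a, b, -, ha, -⟩ := h.two hw
  have := h1 _ (nu_rim h ha (fun hh => hwU (hU _ _ hh)) hk)
  exact nu_le this (by omega)

lemma wheel_supp {V : Type*} {G : SimpleGraph V} {v : V} {C : SimpleGraph V}
    {N U : Finset V} (h : Rim G v C N) {F : SimpleGraph V}
    (hU : ∀ x y, F.Adj x y → x ∈ U) :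
    ∀ x y, (F ⊔ C ⊔ star v N).Adj x y → x ∈ insert v (N ∪ U) := by
  rintro x y ((h1 | h1) | h1)
  · simp [hU _ _ h1]
  · simp [h.mem _ _ h1]
  · rw [star_adj] at h1
    rcases h1 with ⟨_, h1 | h1⟩
    · simp [h1.1]
    · simp [h1.2]

/-- General completion lemma. -/
lemma completion {V : Type*} [Fintype V] {G : SimpleGraph V} (T : Finset V) (M : ℕ → Prop)
    (φ : ℕ → ℕ) (hT : ∀ v ∈ T, ∃ C N, Rim G v C N ∧ N ⊆ T ∧ M N.card)
    (h1 : ∀ u m, M m → φ (u + 1) ≤ φ u + (m - 1))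
    (h2 : ∀ u m t, M m → 2 ≤ t → t ≤ m + 1 → φ (u + t) ≤ φ u + m) :
    ∀ (j : ℕ) (U : Finset V) (F : SimpleGraph V), (T \ U).card = j → U ⊆ T → F ≤ G →
      (∀ x y, F.Adj x y → x ∈ U) → Nu F (φ U.card) →
      ∃ F', F ≤ F' ∧ F' ≤ G ∧ (∀ x y, F'.Adj x y → x ∈ T) ∧ Nu F' (φ T.card) := by
  intro j
  induction j using Nat.strong_induction_on with
  | _ j ih =>
  intro U F hj hUT hFG hU hk
  by_cases hTU : T ⊆ U
  · obtain rfl := Finset.Subset.antisymm hTU hUT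
    exact ⟨F, le_rfl, hFG, hU, hk⟩
  obtain ⟨v, hvT, hvU⟩ := Finset.not_subset.1 hTU
  obtain ⟨C, N, hR, hNT, hM⟩ := hT v hvT
  set U' := insert v (N ∪ U) with hU'
  have hUU' : U ⊆ U' := fun x hx => by simp [hU', hx]
  have hvU' : v ∈ U' := by simp [hU']
  have hU'T : U' ⊆ T := by
    intro x hx
    simp only [hU', Finset.mem_insert, Finset.mem_union] at hx
    rcases hx with rfl | hx | hx
    · exact hvT
    · exact hNT hx
    · exact hUT hx
  have hlt : (T \ U').card < j := by
    rw [← hj]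
    refine Finset.card_lt_card ⟨Finset.sdiff_subset_sdiff le_rfl hUU', fun hh => ?_⟩
    have := hh (Finset.mem_sdiff.2 ⟨hvT, hvU⟩)
    exact (Finset.mem_sdiff.1 this).2 hvU'
  have hcard := Finset.card_sdiff_add_card_eq_card hUU'
  have hsub : U' \ U ⊆ insert v (N \ U) := by
    intro x hx
    simp only [hU', Finset.mem_sdiff, Finset.mem_insert, Finset.mem_union] at hx ⊢
    tauto
  have hle : (U' \ U).card ≤ N.card + 1 :=
    (Finset.card_le_card hsub).trans ((Finset.card_insert_le _ _).trans
      (Nat.succ_le_succ (Finset.card_le_card Finset.sdiff_subset)))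
  obtain ⟨s1, s2⟩ := wheel_step hR hU hvU hk
  have hnu : Nu (F ⊔ C ⊔ star v N) (φ U'.card) := by
    by_cases hNU : N ⊆ U
    · have : U' = insert v U := by rw [hU', Finset.union_eq_right.2 hNU]
      rw [this, Finset.card_insert_of_notMem hvU]
      exact nu_le s1 (h1 _ _ hM)
    · obtain ⟨w, hw, hwU⟩ := Finset.not_subset.1 hNU
      have h2t : 2 ≤ (U' \ U).card := by
        have : ({v, w} : Finset V) ⊆ U' \ U := by
          intro x hx
          simp only [Finset.mem_insert, Finset.mem_singleton] at hx
          rcases hx with rfl | rfl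
          · exact Finset.mem_sdiff.2 ⟨hvU', hvU⟩
          · exact Finset.mem_sdiff.2 ⟨by simp [hU', hw], hwU⟩
        have h3 := Finset.card_le_card this
        rwa [Finset.card_pair (fun hvw : v = w => hR.hub (hvw ▸ hw))] at h3
      rw [← hcard, add_comm]
      exact nu_le (s2 hNU) (h2 _ _ _ hM h2t hle)
  obtain ⟨F', a1, a2, a3, a4⟩ := ih _ hlt U' (F ⊔ C ⊔ star v N) rfl hU'T
    (sup_le (sup_le hFG hR.le) hR.star_le) (wheel_supp hR hU) hnu
  exact ⟨F', (le_sup_left.trans le_sup_left).trans a1, a2, a3, a4⟩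

/-- complete graph on `N` -/
def tri {V : Type*} (N : Finset V) : SimpleGraph V where
  Adj x y := x ≠ y ∧ x ∈ N ∧ y ∈ N
  symm := ⟨fun _ _ h => ⟨h.1.symm, h.2.2, h.2.1⟩⟩
  loopless := ⟨fun _ h => h.1 rfl⟩

/-- `v` lies in a `K₄`. -/
def Quad {V : Type*} (G : SimpleGraph V) (v : V) : Prop :=
  ∃ a b c, G.Adj v a ∧ G.Adj v b ∧ G.Adj v c ∧ G.Adj a b ∧ G.Adj a c ∧ G.Adj b c

lemma quad_rim {V : Type*} {G : SimpleGraph V} {v a b c : V} (h1 : G.Adj v a)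
    (h2 : G.Adj v b) (h3 : G.Adj v c) (h4 : G.Adj a b) (h5 : G.Adj a c) (h6 : G.Adj b c) :
    Rim G v (tri {a, b, c}) {a, b, c} := by
  have n4 := h4.ne
  have n5 := h5.ne
  have n6 := h6.ne
  have hcard : ({a, b, c} : Finset V).card = 3 := Finset.card_eq_three.2 ⟨a, b, c, n4, n5, n6, rfl⟩
  refine ⟨?_, ?_, fun x y h => h.2.1, ?_, ?_, ?_, ⟨a, by simp⟩⟩
  · rintro x y ⟨hne, hx, hy⟩
    simp only [Finset.mem_insert, Finset.mem_singleton] at hx hy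
    rcases hx with rfl | rfl | rfl <;> rcases hy with rfl | rfl | rfl <;>
      first | exact absurd rfl hne | assumption | (apply Adj.symm; assumption)
  · intro w hw
    simp only [Finset.mem_insert, Finset.mem_singleton] at hw
    rcases hw with rfl | rfl | rfl <;> assumption
  · intro x hx y hy
    by_cases hxy : x = y
    · subst hxy; exact Reachable.refl _
    · exact Adj.reachable ⟨hxy, hx, hy⟩
  · rintro x y ⟨hne, hx, hy⟩
    have : ∃ z ∈ ({a, b, c} : Finset V), z ≠ x ∧ z ≠ y := by
      by_contra hcon
      push Not at hcon
      have hs : ({a, b, c} : Finset V) ⊆ {x, y} := by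
        intro z hz
        by_cases hzx : z = x
        · simp [hzx]
        · simp [hcon z hz hzx]
      have := Finset.card_le_card hs
      rw [hcard, Finset.card_pair hne] at this
      omega
    obtain ⟨z, hz, hzx, hzy⟩ := this
    have e1 : ((tri {a, b, c}).deleteEdges {s(x, y)}).Adj x z := by
      rw [deleteEdges_adj]
      refine ⟨⟨hzx.symm, hx, hz⟩, ?_⟩
      simp only [Set.mem_singleton_iff, Sym2.eq_iff]
      rintro (h | h)
      · exact hzy h.2
      · exact hne h.1
    have e2 : ((tri {a, b, c}).deleteEdges {s(x, y)}).Adj z y := by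
      rw [deleteEdges_adj]
      refine ⟨⟨hzy, hz, hy⟩, ?_⟩
      simp only [Set.mem_singleton_iff, Sym2.eq_iff]
      rintro (h | h)
      · exact hzx h.1
      · exact hzy h.1
    exact e1.reachable.trans e2.reachable
  · intro w hw
    have : (tri {a, b, c}).neighborSet w = ((({a, b, c} : Finset V).erase w : Finset V) : Set V) := by
      ext x
      simp only [mem_neighborSet, Finset.coe_erase, Set.mem_sdiff, Finset.mem_coe,
        Set.mem_singleton_iff]
      constructor
      · rintro ⟨p, _, r⟩
        exact ⟨r, fun h => p h.symm⟩
      · rintro ⟨p, r⟩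
        exact ⟨fun h => r h.symm, hw, p⟩
    rw [this, Set.ncard_coe_finset, Finset.card_erase_of_mem hw, hcard]

lemma cycle_rim {V : Type*} {G : SimpleGraph V} {v : V}
    (h : ¬ (G.induce (G.neighborSet v)).IsAcyclic) : ∃ C N, Rim G v C N := by
  unfold IsAcyclic at h
  push Not at h
  obtain ⟨u, p, hp⟩ := h
  set f := (Embedding.induce (G := G) (G.neighborSet v)).toHom with hf
  have hinj : Function.Injective f := (Embedding.induce (G := G) (G.neighborSet v)).injective
  have hc : (p.map f).IsCycle := hp.map hinj
  set q := p.map f with hq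
  have hsup : ∀ w ∈ q.support, G.Adj v w := by
    intro w hw
    rw [hq, Walk.support_map, List.mem_map] at hw
    obtain ⟨w', _, rfl⟩ := hw
    exact w'.2
  set C := q.toSubgraph.spanningCoe with hC
  have hedge : ∀ e ∈ q.edges, e ∈ C.edgeSet := by
    intro e he
    rw [hC, Subgraph.edgeSet_spanningCoe, Walk.mem_edges_toSubgraph]
    exact he
  have hc' := hc.transfer hedge
  set r := q.transfer C hedge with hr
  have hCmem : ∀ x y, C.Adj x y → s(x, y) ∈ q.edges := by
    intro x y hxy
    rwa [← Walk.mem_edges_toSubgraph, Subgraph.mem_edgeSet]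
  refine ⟨C, q.support.toFinset, ?_, ?_, ?_, ?_, ?_, ?_, ?_⟩
  · exact q.toSubgraph.spanningCoe_le
  · intro w hw
    exact hsup w (by simpa using hw)
  · intro x y hxy
    simpa using q.fst_mem_support_of_mem_edges (hCmem x y hxy)
  · intro x hx y hy
    have hx' : x ∈ r.support := by simpa [hr] using hx
    have hy' : y ∈ r.support := by simpa [hr] using hy
    exact (r.takeUntil x hx').reachable.symm.trans (r.takeUntil y hy').reachable
  · intro x y hxy
    by_contra hcon
    have hb : C.IsBridge s(x, y) := isBridge_iff.2 hcon
    refine (isBridge_iff_forall_cycle_notMem (by simpa using hxy)).1 hb r hc' ?_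
    rw [hr, Walk.edges_transfer]
    exact hCmem x y hxy
  · intro w hw
    exact hc.ncard_neighborSet_toSubgraph_eq_two (by simpa using hw)
  · exact ⟨f u, by simp⟩

lemma Rim.card_three {V : Type*} {G : SimpleGraph V} {v : V} {C : SimpleGraph V} {N : Finset V}
    (h : Rim G v C N) : 3 ≤ N.card := by
  obtain ⟨w, hw⟩ := h.ne
  obtain ⟨a, b, hab, ha, hb, -⟩ := h.two hw
  have hs : ({w, a, b} : Finset V) ⊆ N := by
    intro x hx
    simp only [Finset.mem_insert, Finset.mem_singleton] at hx
    rcases hx with rfl | rfl | rfl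
    · exact hw
    · exact h.mem _ _ ha.symm
    · exact h.mem _ _ hb.symm
  have := Finset.card_le_card hs
  rwa [Finset.card_eq_three.2 ⟨w, a, b, ha.ne, hb.ne, hab, rfl⟩] at this

lemma Rim.card_four {V : Type*} {G : SimpleGraph V} {v : V} {C : SimpleGraph V} {N : Finset V}
    (h : Rim G v C N) (hq : ¬ Quad G v) : 4 ≤ N.card := by
  by_contra hcon
  have h3 : N.card = 3 := by have := h.card_three; omega
  obtain ⟨w, hw⟩ := h.ne
  obtain ⟨a, b, hab, ha, hb, -⟩ := h.two hw
  have haN := h.mem _ _ ha.symm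
  have hbN := h.mem _ _ hb.symm
  have hs : ({w, a, b} : Finset V) ⊆ N := by
    intro x hx
    simp only [Finset.mem_insert, Finset.mem_singleton] at hx
    rcases hx with rfl | rfl | rfl <;> assumption
  have hN : ({w, a, b} : Finset V) = N := Finset.eq_of_subset_of_card_le hs (by
    rw [h3, Finset.card_eq_three.2 ⟨w, a, b, ha.ne, hb.ne, hab, rfl⟩])
  have hC : C.Adj a b := by
    obtain ⟨c, d, hcd, hc, hd, -⟩ := h.two haN
    have hcN := h.mem _ _ hc.symm
    have hdN := h.mem _ _ hd.symm
    rw [← hN] at hcN hdN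
    simp only [Finset.mem_insert, Finset.mem_singleton] at hcN hdN
    rcases hcN with rfl | rfl | rfl
    · rcases hdN with rfl | rfl | rfl
      · exact absurd rfl hcd
      · exact absurd rfl hd.ne
      · exact hd
    · exact absurd rfl hc.ne
    · exact hc
  exact hq ⟨w, a, b, h.spoke _ hw, h.spoke _ haN, h.spoke _ hbN, h.le ha, h.le hb, h.le hC⟩

/-- The target cyclomatic number. -/
def hh (n : ℕ) : ℕ := 3 * (n / 4) + (if n % 4 = 0 then 0 else if n % 4 = 1 then 2 else 3)

lemma hh_le (n : ℕ) : 4 * hh n ≤ 3 * n + 6 := by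
  unfold hh; split_ifs <;> omega

lemma hh_one (u : ℕ) : hh (u + 1) ≤ hh u + 2 := by
  unfold hh; split_ifs <;> omega

lemma hh_two (u t : ℕ) (h2 : 2 ≤ t) (h4 : t ≤ 4) : hh (u + t) ≤ hh u + 3 := by
  unfold hh
  interval_cases t <;> split_ifs <;> omega

/-- If every vertex lies in a `K₄`. -/
lemma nu_quad {V : Type*} [Fintype V] {G : SimpleGraph V} (h : ∀ v, Quad G v) :
    Nu G (hh (Fintype.card V)) := by
  obtain ⟨F, -, h1, -, h2⟩ := completion (G := G) Finset.univ (fun m => m = 3) hh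
    (by
      intro v _
      obtain ⟨a, b, c, h1, h2, h3, h4, h5, h6⟩ := h v
      exact ⟨_, _, quad_rim h1 h2 h3 h4 h5 h6, Finset.subset_univ _,
        Finset.card_eq_three.2 ⟨a, b, c, h4.ne, h5.ne, h6.ne, rfl⟩⟩)
    (by rintro u m rfl; exact hh_one u)
    (by rintro u m t rfl a b; exact hh_two u t a b)
    _ ∅ ⊥ rfl (Finset.empty_subset _) bot_le (fun _ _ h => h.elim)
    (by simpa [hh] using nu_bot)
  exact nu_mono h1 h2

/-- Completion to the whole graph, with excess `c`. -/
lemma nu_complete {V : Type*} [Fintype V] {G : SimpleGraph V} (hG : LocallyNonforesty G)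
    (c : ℕ) {U : Finset V} {F : SimpleGraph V} {k : ℕ} (hF : F ≤ G)
    (hU : ∀ x y, F.Adj x y → x ∈ U) (hk : Nu F k) (hc : 3 * U.card + c ≤ 4 * k) :
    ∃ l, Nu G l ∧ 3 * Fintype.card V + c ≤ 4 * l := by
  obtain ⟨F', -, h1, -, h2⟩ := completion (G := G) Finset.univ (fun m => 3 ≤ m)
    (fun u => (3 * u + c + 3) / 4)
    (by
      intro v _
      obtain ⟨C, N, hR⟩ := cycle_rim (hG v)
      exact ⟨C, N, hR, Finset.subset_univ _, hR.card_three⟩)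
    (by intro u m hm; omega)
    (by intro u m t hm a b; omega)
    _ U F rfl (Finset.subset_univ _) hF hU (nu_le hk (by omega))
  refine ⟨_, nu_mono h1 h2, ?_⟩
  simp only [Finset.card_univ]
  omega

lemma del_adj {V : Type*} {G : SimpleGraph V} {x y p q : V} (h : G.Adj p q)
    (hne : ¬ (p = x ∧ q = y)) (hne' : ¬ (p = y ∧ q = x)) :
    (G.deleteEdges {s(x, y)}).Adj p q := by
  rw [deleteEdges_adj]
  refine ⟨h, ?_⟩
  simp only [Set.mem_singleton_iff, Sym2.eq_iff]
  tauto

lemma le_del {V : Type*} {G F : SimpleGraph V} {x y : V} (h : F ≤ G) (hn : ¬ F.Adj x y) :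
    F ≤ G.deleteEdges {s(x, y)} := by
  intro p q hpq
  refine del_adj (h hpq) ?_ ?_
  · rintro ⟨rfl, rfl⟩; exact hn hpq
  · rintro ⟨rfl, rfl⟩; exact hn hpq.symm

/-- two surplus edges -/
lemma nu_two {V : Type*} [Fintype V] {G F : SimpleGraph V} {k : ℕ} (hF : F ≤ G) (hk : Nu F k)
    (D : Finset V) (hD : 3 ≤ D.card)
    (key : ∀ u ∈ D, ∃ w z z', z ≠ z' ∧ G.Adj u w ∧ ¬ F.Adj u w ∧ G.Adj u z ∧ G.Adj u z' ∧
      G.Adj w z ∧ G.Adj w z') : Nu G (k + 2) := by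
  obtain ⟨u, hu⟩ : D.Nonempty := Finset.card_pos.1 (by omega)
  obtain ⟨w, z, z', hzz, huw, hnF, huz, huz', hwz, hwz'⟩ := key u hu
  obtain ⟨u2, hu2, hu2n⟩ : ∃ x ∈ D, x ∉ ({u, w} : Finset V) := by
    by_contra hcon
    push Not at hcon
    have := Finset.card_le_card (show D ⊆ {u, w} from hcon)
    have := Finset.card_le_two (a := u) (b := w)
    omega
  simp only [Finset.mem_insert, Finset.mem_singleton, not_or] at hu2n
  obtain ⟨w2, y, y', hyy, huw2, hnF2, huy, huy', hwy, hwy'⟩ := key u2 hu2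
  -- first deletion
  have r1 : (G.deleteEdges {s(u, w)}).Reachable u w :=
    (del_adj huz (fun h => hwz.ne h.2.symm) (fun h => huw.ne h.1)).reachable.trans
      (del_adj hwz.symm (fun h => huz.ne h.1.symm) (fun h => hwz.ne h.1.symm)).reachable
  refine nu_del huw r1 (k := k + 1) ?_
  have hF1 := le_del hF hnF
  set G1 := G.deleteEdges {s(u, w)} with hG1
  have hadj : ∀ q, G.Adj u2 q → G1.Adj u2 q := fun q hq =>
    del_adj hq (fun h => hu2n.1 h.1) (fun h => hu2n.2 h.1)
  obtain ⟨t, hut, hwt⟩ : ∃ t, G1.Adj u2 t ∧ G1.Adj w2 t := by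
    by_cases hc : G1.Adj w2 y
    · exact ⟨y, hadj _ huy, hc⟩
    · refine ⟨y', hadj _ huy', del_adj hwy' ?_ ?_⟩
      · rintro ⟨rfl, rfl⟩
        exact hc (del_adj hwy (fun h => hyy h.2) (fun h => huw.ne h.1))
      · rintro ⟨rfl, rfl⟩
        exact hc (del_adj hwy (fun h => huw.ne h.1.symm) (fun h => hyy h.2))
  have r2 : (G1.deleteEdges {s(u2, w2)}).Reachable u2 w2 :=
    (del_adj hut (fun h => hwt.ne h.2.symm) (fun h => huw2.ne h.1)).reachable.trans
      (del_adj hwt.symm (fun h => hut.ne h.1.symm) (fun h => hwt.ne h.1.symm)).reachable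
  exact nu_del (hadj _ huw2) r2 (nu_mono (le_del hF1 hnF2) hk)

lemma all_quad {V : Type*} [Fintype V] {G : SimpleGraph V} (hG : LocallyNonforesty G)
    (hb : ∀ k, Nu G k → 4 * k ≤ 3 * Fintype.card V + 6) : ∀ v, Quad G v := by
  by_contra hcon
  push Not at hcon
  obtain ⟨v0, hv0⟩ := hcon
  set S : Finset V := Finset.univ.filter (fun v => Quad G v) with hS
  set P : Finset V → Prop := fun U => S ⊆ U ∧ U ≠ Finset.univ ∧ ∃ F ≤ G,
    (∀ x y, F.Adj x y → x ∈ U) ∧ ∃ k, Nu F k ∧ 3 * U.card ≤ 4 * k with hP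
  have hPS : P S := by
    refine ⟨le_rfl, fun h => hv0 ?_, ?_⟩
    · have : v0 ∈ S := h ▸ Finset.mem_univ v0
      simpa [hS] using this
    · obtain ⟨F, -, h1, h2, h3⟩ := completion (G := G) S (fun m => m = 3)
        (fun u => (3 * u + 3) / 4)
        (by
          intro v hv
          have hv' : Quad G v := by simpa [hS] using hv
          obtain ⟨a, b, c, h1, h2, h3, h4, h5, h6⟩ := hv'
          refine ⟨_, _, quad_rim h1 h2 h3 h4 h5 h6, ?_,
            Finset.card_eq_three.2 ⟨a, b, c, h4.ne, h5.ne, h6.ne, rfl⟩⟩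
          intro x hx
          simp only [hS, Finset.mem_filter, Finset.mem_univ, true_and]
          simp only [Finset.mem_insert, Finset.mem_singleton] at hx
          rcases hx with rfl | rfl | rfl
          · exact ⟨v, b, c, h1.symm, h4, h5, h2, h3, h6⟩
          · exact ⟨v, a, c, h2.symm, h4.symm, h6, h1, h3, h5⟩
          · exact ⟨v, a, b, h3.symm, h5.symm, h6.symm, h1, h2, h4⟩)
        (by intro u m hm; omega)
        (by intro u m t hm a b; omega)
        _ ∅ ⊥ rfl (Finset.empty_subset _) bot_le (fun _ _ h => h.elim)
        (by simpa using nu_bot)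
      exact ⟨F, h1, h2, _, h3, by omega⟩
  obtain ⟨U, hUmem, hUmax⟩ := Finset.exists_max_image (Finset.univ.filter P) Finset.card
    ⟨S, by simp [hPS]⟩
  obtain ⟨hSU, hUne, F, hFG, hU, k, hk, hkc⟩ : P U := by simpa using hUmem
  have hmax : ∀ U', P U' → U'.card ≤ U.card := fun U' h => hUmax U' (by simp [h])
  have hnq : ∀ x, x ∉ U → ¬ Quad G x := fun x hx hq => hx (hSU (by simp [hS, hq]))
  obtain ⟨v, hv⟩ : ∃ v, v ∉ U := by
    by_contra hc
    push Not at hc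
    exact hUne (Finset.eq_univ_iff_forall.2 hc)
  obtain ⟨C, N, hR⟩ := cycle_rim (hG v)
  have h4 := hR.card_four (hnq v hv)
  obtain ⟨s1, s2⟩ := wheel_step hR hU hv hk
  have hsupp := wheel_supp hR hU
  have hF'G : F ⊔ C ⊔ star v N ≤ G := sup_le (sup_le hFG hR.le) hR.star_le
  set F' := F ⊔ C ⊔ star v N with hF'
  set U' := insert v (N ∪ U) with hU'
  have hUU' : U ⊆ U' := fun x hx => by simp [hU', hx]
  have hlt : U.card < U'.card := Finset.card_lt_card ⟨hUU', fun h => hv (h (by simp [hU']))⟩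
  have hcardU : U'.card = 1 + (N \ U).card + U.card := by
    rw [hU', Finset.card_insert_of_notMem (by simp [hR.hub, hv]), ← Finset.sdiff_union_self_eq_union,
      Finset.card_union_of_disjoint Finset.sdiff_disjoint]
    omega
  have hNU : (N \ U).card ≤ N.card := Finset.card_le_card Finset.sdiff_subset
  have huniv : ∀ l, Nu F' l → 3 * U'.card ≤ 4 * l → U' = Finset.univ := by
    intro l hl hle
    by_contra hne
    have := hmax U' ⟨hSU.trans hUU', hne, F', hF'G, hsupp, l, hl, hle⟩
    omega
  by_cases hsub : N ⊆ U
  · have h0 : (N \ U).card = 0 := by simp [Finset.sdiff_eq_empty_iff_subset.2 hsub]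
    have hu := huniv _ s1 (by omega)
    have hn : U'.card = Fintype.card V := by rw [hu]; rfl
    have := hb _ (nu_mono hF'G s1)
    omega
  · have s2 := s2 hsub
    have hu := huniv _ s2 (by omega)
    have hn : U'.card = Fintype.card V := by rw [hu]; rfl
    have hb1 := hb _ (nu_mono hF'G s2)
    have hD : 3 ≤ (N \ U).card := by omega
    have := hb _ (nu_two hF'G s2 (N \ U) hD (by
      intro u hu
      obtain ⟨huN, huU⟩ := Finset.mem_sdiff.1 hu
      obtain ⟨C2, N2, hR2⟩ := cycle_rim (hG u)
      have h42 := hR2.card_four (hnq u huU)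
      obtain ⟨a, b, -, -, -, hab⟩ := hR.two huN
      obtain ⟨w, hw, hwn⟩ : ∃ w ∈ N2, w ∉ ({v, a, b} : Finset V) := by
        by_contra hcon
        push Not at hcon
        have := Finset.card_le_card (show N2 ⊆ {v, a, b} from hcon)
        have := Finset.card_le_three (a := v) (b := a) (c := b)
        omega
      simp only [Finset.mem_insert, Finset.mem_singleton, not_or] at hwn
      obtain ⟨z, z', hzz, hz, hz', -⟩ := hR2.two hw
      refine ⟨w, z, z', hzz, hR2.spoke _ hw, ?_, hR2.spoke _ (hR2.mem _ _ hz.symm),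
        hR2.spoke _ (hR2.mem _ _ hz'.symm), hR2.le hz, hR2.le hz'⟩
      rintro ((h | h) | h)
      · exact huU (hU _ _ h)
      · rcases hab _ h with h | h
        · exact hwn.2.1 h
        · exact hwn.2.2 h
      · rw [star_adj] at h
        rcases h with ⟨_, h | h⟩
        · exact hR.hub (h.1 ▸ huN)
        · exact hwn.1 h.1))
    omega

lemma edge_quad {V : Type*} [Fintype V] {G : SimpleGraph V} (hq : ∀ v, Quad G v)
    (hb : ∀ k, Nu G k → k ≤ hh (Fintype.card V)) {x y : V} (hxy : G.Adj x y)
    (hr : (G.deleteEdges {s(x, y)}).Reachable x y) :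
    ∃ a b, G.Adj x a ∧ G.Adj x b ∧ G.Adj y a ∧ G.Adj y b ∧ G.Adj a b := by
  by_contra hcon
  push Not at hcon
  have key : ∀ p q a b, G.Adj p q → G.Adj p a → G.Adj p b → G.Adj q a → G.Adj q b → G.Adj a b →
      (G.deleteEdges {s(x, y)}).Adj p q := by
    intro p q a b h h1 h2 h3 h4 h5
    refine del_adj h ?_ ?_
    · rintro ⟨rfl, rfl⟩
      exact hcon a b h1 h2 h3 h4 h5
    · rintro ⟨rfl, rfl⟩
      exact hcon a b h3 h4 h1 h2 h5
  have hq' : ∀ v, Quad (G.deleteEdges {s(x, y)}) v := by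
    intro v
    obtain ⟨a, b, c, h1, h2, h3, h4, h5, h6⟩ := hq v
    exact ⟨a, b, c, key v a b c h1 h2 h3 h4 h5 h6, key v b a c h2 h1 h3 h4.symm h6 h5,
      key v c a b h3 h1 h2 h5.symm h6.symm h4, key a b v c h4 h1.symm h5 h2.symm h6 h3,
      key a c v b h5 h1.symm h4 h3.symm h6.symm h2, key b c v a h6 h2.symm h4.symm h3.symm h5.symm h1⟩
  have := hb _ (nu_del hxy hr (nu_quad hq'))
  omega

lemma boundary {V : Type*} {G : SimpleGraph V} {A : Set V} (hA : (G.induce A).Preconnected)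
    (T : Set V) {a b : V} (ha : a ∈ A) (hb : b ∈ A) (haT : a ∈ T) (hbT : b ∉ T) :
    ∃ p q, p ∈ A ∧ q ∈ A ∧ p ∈ T ∧ q ∉ T ∧ G.Adj p q := by
  obtain ⟨w⟩ := hA ⟨a, ha⟩ ⟨b, hb⟩
  obtain ⟨d, -, h1, h2⟩ := w.exists_boundary_dart {z | z.1 ∈ T} haT hbT
  exact ⟨d.fst.1, d.snd.1, d.fst.2, d.snd.2, h1, h2, d.adj⟩

lemma block_reach {V : Type*} {G : SimpleGraph V} {B : Set V}
    (hB : ∀ v ∈ B, (G.induce (B \ {v})).Preconnected) {x y z : V} (hx : x ∈ B) (hy : y ∈ B)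
    (hz : z ∈ B) (hxy : x ≠ y) (hzx : z ≠ x) (hzy : z ≠ y) :
    (G.deleteEdges {s(x, y)}).Reachable x y := by
  have h1 : (G.deleteEdges {s(x, y)}).Reachable x z := by
    have := hB y hy ⟨x, hx, hxy⟩ ⟨z, hz, hzy⟩
    exact this.map (⟨Subtype.val, fun {p q} h => del_adj (by exact h)
      (fun h => q.2.2 h.2) (fun h => p.2.2 h.1)⟩ : G.induce (B \ {y}) →g G.deleteEdges {s(x, y)})
  have h2 : (G.deleteEdges {s(x, y)}).Reachable z y := by
    have := hB x hx ⟨z, hz, hzx⟩ ⟨y, hy, hxy.symm⟩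
    exact this.map (⟨Subtype.val, fun {p q} h => del_adj (by exact h)
      (fun h => p.2.2 h.1) (fun h => q.2.2 h.2)⟩ : G.induce (B \ {x}) →g G.deleteEdges {s(x, y)})
  exact h1.trans h2

/-- A connected piece. -/
structure Sit {V : Type*} (G : SimpleGraph V) (U : Finset V) (F : SimpleGraph V) (k : ℕ) :
    Prop where
  le : F ≤ G
  supp : ∀ x y, F.Adj x y → x ∈ U
  conn : ∀ x ∈ U, ∀ y ∈ U, F.Reachable x y
  nu : Nu F k

/-- `U₂` with `F₂` arises from `U` by attaching the clique `Q` along `x ∈ B`. -/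
structure Att {V : Type*} (G : SimpleGraph V) (B : Set V) (U U₂ Q : Finset V)
    (F F₂ : SimpleGraph V) (k k₂ t : ℕ) (x y : V) : Prop where
  sit : Sit G U₂ F₂ k₂
  hU₂ : U₂ = Q ∪ U
  adj : ∀ p q, F₂.Adj p q → F.Adj p q ∨ (p ∈ Q ∧ q ∈ Q)
  xU : x ∈ U
  xB : x ∈ B
  xQ : x ∈ Q
  yU : y ∉ U
  yB : y ∈ B
  yQ : y ∈ Q
  cQ : Q.card = 4
  card : U₂.card = U.card + t
  ht : (t = 1 ∧ k₂ = k + 2) ∨ (t = 2 ∧ k₂ = k + 3) ∨ (t = 3 ∧ k₂ = k + 3)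

lemma quad_card {V : Type*} {G : SimpleGraph V} {v a b c : V} (h1 : G.Adj v a)
    (h2 : G.Adj v b) (h3 : G.Adj v c) (h4 : G.Adj a b) (h5 : G.Adj a c) (h6 : G.Adj b c) :
    (insert v ({a, b, c} : Finset V)).card = 4 := by
  rw [Finset.card_insert_of_notMem (by simp [h1.ne, h2.ne, h3.ne]),
    Finset.card_eq_three.2 ⟨a, b, c, h4.ne, h5.ne, h6.ne, rfl⟩]

lemma wheel_conn {V : Type*} {G : SimpleGraph V} {v : V} {C : SimpleGraph V}
    {N : Finset V} (h : Rim G v C N) (F : SimpleGraph V) {x : V} (hx : x ∈ N) :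
    ∀ p ∈ insert v N, (F ⊔ C ⊔ star v N).Reachable x p := by
  intro p hp
  rcases Finset.mem_insert.1 hp with rfl | hp
  · refine Adj.reachable (Or.inr (star_adj.2 ⟨?_, Or.inr ⟨rfl, hx⟩⟩))
    rintro rfl; exact h.hub hx
  · exact (h.conn x hx p hp).mono (le_sup_right.trans le_sup_left)

lemma extend {V : Type*} [Fintype V] {G : SimpleGraph V} (hq : ∀ v, Quad G v)
    (hb : ∀ k, Nu G k → k ≤ hh (Fintype.card V)) {B : Set V}
    (hB1 : (G.induce B).Connected) (hB2 : ∀ v ∈ B, (G.induce (B \ {v})).Preconnected)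
    (hB7 : 7 ≤ B.ncard) {U : Finset V} {F : SimpleGraph V} {k : ℕ} (hS : Sit G U F k)
    {b₀ b₁ : V} (h0 : b₀ ∈ B) (h0U : b₀ ∈ U) (h1 : b₁ ∈ B) (h1U : b₁ ∉ U) :
    ∃ U₂ Q F₂ k₂ t x y, Att G B U U₂ Q F F₂ k k₂ t x y := by
  obtain ⟨x, y, hxB, hyB, hxU, hyU, hxy⟩ := boundary hB1.preconnected (↑U : Set V) h0 h1 h0U h1U
  simp only [Finset.mem_coe] at hxU hyU
  obtain ⟨z, hz, hzn⟩ : ∃ z ∈ B, z ∉ ({x, y} : Set V) := by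
    by_contra hcon
    push Not at hcon
    have := Set.ncard_le_ncard (show B ⊆ {x, y} from hcon) (Set.toFinite _)
    rw [Set.ncard_pair hxy.ne] at this
    omega
  simp only [Set.mem_insert_iff, Set.mem_singleton_iff, not_or] at hzn
  obtain ⟨a, b, hxa, hxb, hya, hyb, hab⟩ := edge_quad hq hb hxy
    (block_reach hB2 hxB hyB hz hxy.ne hzn.1 hzn.2)
  have hR := quad_rim hxy.symm hya hyb hxa hxb hab
  have hcQ := quad_card hxy.symm hya hyb hxa hxb hab
  have hxN : x ∈ ({x, a, b} : Finset V) := by simp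
  obtain ⟨N, hN⟩ : ∃ N : Finset V, N = {x, a, b} := ⟨_, rfl⟩
  rw [← hN] at hR hcQ hxN
  have hN3 : N.card = 3 := hN ▸ Finset.card_eq_three.2 ⟨x, a, b, hxa.ne, hxb.ne, hab.ne, rfl⟩
  obtain ⟨s1, s2⟩ := wheel_step hR hS.supp hyU hS.nu
  have hcardU : (insert y N ∪ U).card = U.card + (1 + (N \ U).card) := by
    rw [Finset.insert_union, Finset.card_insert_of_notMem (by simp [hR.hub, hyU]),
      ← Finset.sdiff_union_self_eq_union, Finset.card_union_of_disjoint Finset.sdiff_disjoint]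
    omega
  have hNU : (N \ U).card ≤ 2 := by
    have : N \ U ⊆ N.erase x := by
      intro p hp
      rw [Finset.mem_sdiff] at hp
      refine Finset.mem_erase.2 ⟨?_, hp.1⟩
      rintro rfl; exact hp.2 hxU
    have := Finset.card_le_card this
    rw [Finset.card_erase_of_mem hxN] at this
    omega
  obtain ⟨k₂, hk₂, ht⟩ : ∃ k₂, Nu (F ⊔ tri N ⊔ star y N) k₂ ∧
      ((1 + (N \ U).card = 1 ∧ k₂ = k + 2) ∨ (1 + (N \ U).card = 2 ∧ k₂ = k + 3) ∨
        (1 + (N \ U).card = 3 ∧ k₂ = k + 3)) := by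
    by_cases hsub : N ⊆ U
    · have h0 : (N \ U).card = 0 := by simp [Finset.sdiff_eq_empty_iff_subset.2 hsub]
      exact ⟨k + 2, nu_le s1 (by omega), by omega⟩
    · have h0 : (N \ U).card ≠ 0 := by
        rw [Finset.card_ne_zero, Finset.sdiff_nonempty]; exact hsub
      exact ⟨k + 3, nu_le (s2 hsub) (by omega), by omega⟩
  have hreach : ∀ p ∈ insert y N ∪ U, (F ⊔ tri N ⊔ star y N).Reachable x p := by
    intro p hp
    rcases Finset.mem_union.1 hp with hp | hp
    · exact wheel_conn hR F hxN p hp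
    · exact (hS.conn x hxU p hp).mono (le_sup_left.trans le_sup_left)
  refine ⟨insert y N ∪ U, insert y N, F ⊔ tri N ⊔ star y N, k₂, 1 + (N \ U).card, x, y,
    ⟨sup_le (sup_le hS.le hR.le) hR.star_le, ?_, ?_, hk₂⟩, rfl, ?_, hxU, hxB, by simp [hxN], hyU,
    hyB, by simp, hcQ, hcardU, ht⟩
  · rw [Finset.insert_union]
    exact wheel_supp hR hS.supp
  · intro p hp q hq
    exact (hreach p hp).symm.trans (hreach q hq)
  · rintro p q ((h | h) | h)
    · exact Or.inl h
    · exact Or.inr ⟨by simp [h.2.1], by simp [h.2.2]⟩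
    · rw [star_adj] at h
      rcases h with ⟨_, ⟨rfl, h⟩ | ⟨rfl, h⟩⟩
      · exact Or.inr ⟨by simp, by simp [h]⟩
      · exact Or.inr ⟨by simp [h], by simp⟩

lemma final_step {V : Type*} [Fintype V] {G : SimpleGraph V} {B : Set V}
    (hB2 : ∀ v ∈ B, (G.induce (B \ {v})).Preconnected)
    (hB7 : 7 ≤ B.ncard) {U U₂ Q : Finset V} {F F₂ : SimpleGraph V} {k k₂ : ℕ} {x y : V}
    (hU : ∀ x y, F.Adj x y → x ∈ U)
    (hA : Att G B U U₂ Q F F₂ k k₂ 3 x y) (hsub : ∀ b ∈ B, b ∈ U₂) :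
    ∃ F₃, F₃ ≤ G ∧ (∀ x y, F₃.Adj x y → x ∈ U₂) ∧ Nu F₃ (k₂ + 1) := by
  have hQU : Q ∩ U = {x} := by
    have h1 := Finset.card_union_add_card_inter Q U
    have h2 := hA.card
    rw [hA.hU₂] at h2
    have h3 := hA.cQ
    have h4 : (Q ∩ U).card = 1 := by omega
    obtain ⟨z, hz⟩ := Finset.card_eq_one.1 h4
    have hx : x ∈ Q ∩ U := Finset.mem_inter.2 ⟨hA.xQ, hA.xU⟩
    rw [hz, Finset.mem_singleton] at hx
    rw [hz, hx]
  obtain ⟨z, hzB, hzQ⟩ : ∃ z ∈ B, z ∉ Q := by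
    by_contra hcon
    push Not at hcon
    have := Set.ncard_le_ncard (show B ⊆ (↑Q : Set V) from hcon) (Set.toFinite _)
    rw [Set.ncard_coe_finset, hA.cQ] at this
    omega
  have hyx : y ≠ x := by rintro rfl; exact hA.yU hA.xU
  have hzx : z ≠ x := by rintro rfl; exact hzQ hA.xQ
  obtain ⟨p, q, hp, hq, hpQ, hqQ, hpq⟩ := boundary (hB2 x hA.xB) (↑Q : Set V)
    (a := y) (b := z) ⟨hA.yB, hyx⟩ ⟨hzB, hzx⟩ hA.yQ hzQ
  simp only [Finset.mem_coe] at hpQ hqQ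
  have hpU : p ∉ U := by
    intro h
    have : p ∈ Q ∩ U := Finset.mem_inter.2 ⟨hpQ, h⟩
    rw [hQU, Finset.mem_singleton] at this
    exact hp.2 this
  have hn : ¬ F₂.Adj p q := by
    intro h
    rcases hA.adj p q h with h | h
    · exact hpU (hU _ _ h)
    · exact hqQ h.2
  refine ⟨F₂ ⊔ edge p q, sup_le hA.sit.le ?_, ?_,
    nu_edge (hA.sit.conn p (hsub p hp.1) q (hsub q hq.1)) hn hpq.ne hA.sit.nu⟩
  · intro a b hab
    rw [edge_adj] at hab
    rcases hab with ⟨⟨rfl, rfl⟩ | ⟨rfl, rfl⟩, _⟩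
    · exact hpq
    · exact hpq.symm
  · rintro a b (h | h)
    · exact hA.sit.supp _ _ h
    · rw [edge_adj] at h
      rcases h with ⟨⟨rfl, rfl⟩ | ⟨rfl, rfl⟩, _⟩
      · exact hsub _ hp.1
      · exact hsub _ hq.1

lemma block_small {V : Type*} [Fintype V] {G : SimpleGraph V} (hG : LocallyNonforesty G)
    (hb : ∀ k, Nu G k → k ≤ hh (Fintype.card V)) {B : Set V}
    (hB1 : (G.induce B).Connected) (hB2 : ∀ v ∈ B, (G.induce (B \ {v})).Preconnected) :
    B.ncard ≤ 6 := by
  by_contra hB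
  have hB7 : 7 ≤ B.ncard := by omega
  have hb4 : ∀ k, Nu G k → 4 * k ≤ 3 * Fintype.card V + 6 := fun k hk => by
    have := hb k hk
    have := hh_le (Fintype.card V)
    omega
  have hq := all_quad hG hb4
  have hbad : ∀ (U : Finset V) (F : SimpleGraph V) (k : ℕ), F ≤ G →
      (∀ x y, F.Adj x y → x ∈ U) → Nu F k → 4 * k ≤ 3 * U.card + 6 := by
    intro U F k h1 h2 h3
    by_contra hc
    obtain ⟨l, hl, hl'⟩ := nu_complete hG 7 h1 h2 h3 (by omega)
    have := hb4 l hl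
    omega
  have hbad' : ∀ (U : Finset V) (F : SimpleGraph V) (k : ℕ), Sit G U F k →
      4 * k ≤ 3 * U.card + 6 := fun U F k h => hbad U F k h.le h.supp h.nu
  have hsmall : ∀ U : Finset V, (∀ b ∈ B, b ∈ U) → 7 ≤ U.card := by
    intro U hU
    have := Set.ncard_le_ncard (show B ⊆ (↑U : Set V) from hU) (Set.toFinite _)
    rw [Set.ncard_coe_finset] at this
    omega
  obtain ⟨⟨v, hv⟩⟩ := hB1.nonempty
  obtain ⟨a, b, c, h1, h2, h3, h4, h5, h6⟩ := hq v
  have hR := quad_rim h1 h2 h3 h4 h5 h6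
  have hS1 : Sit G (insert v {a, b, c}) (⊥ ⊔ tri {a, b, c} ⊔ star v {a, b, c}) 3 := by
    obtain ⟨-, s2⟩ := wheel_step hR (U := ∅) (F := ⊥) (k := 0) (fun _ _ h => h.elim) (by simp) nu_bot
    have s3 := s2 (by simp)
    rw [Finset.card_eq_three.2 ⟨a, b, c, h4.ne, h5.ne, h6.ne, rfl⟩] at s3
    refine ⟨sup_le (sup_le bot_le hR.le) hR.star_le, ?_, ?_, by simpa using s3⟩
    · have := wheel_supp hR (U := ∅) (F := ⊥) (fun _ _ h => h.elim)
      simpa using this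
    · have hc := wheel_conn hR ⊥ (x := a) (by simp)
      exact fun p hp q hq => (hc p hp).symm.trans (hc q hq)
  have hc1 := quad_card h1 h2 h3 h4 h5 h6
  have hvU : v ∈ insert v ({a, b, c} : Finset V) := by simp
  revert hS1 hc1 hvU
  generalize (insert v ({a, b, c} : Finset V)) = U1
  generalize (⊥ ⊔ tri {a, b, c} ⊔ star v {a, b, c} : SimpleGraph V) = F1
  intro hS1 hc1 hvU
  have step : ∀ (U : Finset V) (F : SimpleGraph V) (k : ℕ), Sit G U F k → v ∈ U →
      (∀ b ∈ B, b ∈ U) ∨ ∃ U₂ Q F₂ k₂ t x y, Att G B U U₂ Q F F₂ k k₂ t x y := by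
    intro U F k hS hvU
    by_cases hall : ∀ b ∈ B, b ∈ U
    · exact Or.inl hall
    · push Not at hall
      obtain ⟨b₁, hb1, hb2⟩ := hall
      exact Or.inr (extend hq hb hB1 hB2 hB7 hS hv hvU hb1 hb2)
  rcases step _ _ _ hS1 hvU with hall | ⟨U2, Q2, F2, k2, t2, x2, y2, hA2⟩
  · have := hsmall _ hall
    omega
  have hv2 : v ∈ U2 := by rw [hA2.hU₂]; simp [hvU]
  have e2 := hA2.ht
  have c2 := hA2.card
  rcases step _ _ _ hA2.sit hv2 with hall | ⟨U3, Q3, F3, k3, t3, x3, y3, hA3⟩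
  · have := hsmall _ hall
    obtain rfl : t2 = 3 := by omega
    obtain ⟨F', f1, f2, f3⟩ := final_step hB2 hB7 hS1.supp hA2 hall
    have := hbad _ _ _ f1 f2 f3
    omega
  have hv3 : v ∈ U3 := by rw [hA3.hU₂]; simp [hv2]
  have e3 := hA3.ht
  have c3 := hA3.card
  have b3 := hbad' _ _ _ hA3.sit
  rcases step _ _ _ hA3.sit hv3 with hall | ⟨U4, Q4, F4, k4, t4, x4, y4, hA4⟩
  · obtain rfl : t3 = 3 := by omega
    obtain ⟨F', f1, f2, f3⟩ := final_step hB2 hB7 hA2.sit.supp hA3 hall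
    have := hbad _ _ _ f1 f2 f3
    omega
  have e4 := hA4.ht
  have c4 := hA4.card
  have b4 := hbad' _ _ _ hA4.sit
  omega

lemma quad_nonforesty {V : Type*} {G : SimpleGraph V} (h : ∀ v, Quad G v) :
    LocallyNonforesty G := by
  intro v hac
  obtain ⟨a, b, c, h1, h2, h3, h4, h5, h6⟩ := h v
  have ha : (G.induce (G.neighborSet v)).Adj ⟨a, h1⟩ ⟨b, h2⟩ := h4
  have hb : (G.induce (G.neighborSet v)).Adj ⟨b, h2⟩ ⟨c, h3⟩ := h6
  have hc : (G.induce (G.neighborSet v)).Adj ⟨c, h3⟩ ⟨a, h1⟩ := h5.symm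
  have hcyc : (Walk.cons ha (Walk.cons hb (Walk.cons hc Walk.nil))).IsCycle := by
    have e1 := ha.ne
    have e2 := hc.ne.symm
    have e3 := hb.ne
    rw [Walk.cons_isCycle_iff]
    simp [e1, e2, e3, e1.symm, e2.symm, e3.symm, Walk.isPath_def]
  exact hac _ hcyc

/-- a good graph on `n` vertices exists -/
def Good (n : ℕ) : Prop := ∃ (V : Type) (_ : Fintype V) (H : SimpleGraph V),
  Fintype.card V = n ∧ H.Connected ∧ (∀ v, Quad H v) ∧ H.edgeSet.ncard + 1 ≤ n + hh n

lemma good_step {n : ℕ} (h : Good n) : Good (n + 4) := by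
  obtain ⟨V, _, H, hc, hcon, hq, he⟩ := h
  obtain ⟨a⟩ := hcon.nonempty
  set K : SimpleGraph (V ⊕ Fin 4) := H.map Function.Embedding.inl ⊔
    (⊤ : SimpleGraph (Fin 4)).map Function.Embedding.inr ⊔ edge (Sum.inl a) (Sum.inr 0) with hK
  have hl : ∀ x y, H.Adj x y → K.Adj (Sum.inl x) (Sum.inl y) := fun x y h =>
    Or.inl (Or.inl ⟨fun e => h.ne (Sum.inl_injective e), x, y, h, rfl, rfl⟩)
  have hr : ∀ x y : Fin 4, x ≠ y → K.Adj (Sum.inr x) (Sum.inr y) := fun x y h =>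
    Or.inl (Or.inr ⟨fun e => h (Sum.inr_injective e), x, y, h, rfl, rfl⟩)
  have hm : K.Adj (Sum.inl a) (Sum.inr 0) := Or.inr (by simp [edge_adj])
  refine ⟨V ⊕ Fin 4, inferInstance, K, by simp [hc], ?_, ?_, ?_⟩
  · have hreach : ∀ p, K.Reachable (Sum.inl a) p := by
      rintro (p | p)
      · exact (hcon.preconnected a p).map (⟨Sum.inl, fun {x y} h => hl x y h⟩ : H →g K)
      · by_cases hp : p = 0
        · rw [hp]; exact hm.reachable
        · exact hm.reachable.trans (hr 0 p (fun h => hp h.symm)).reachable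
    have : Nonempty (V ⊕ Fin 4) := ⟨Sum.inl a⟩
    exact ⟨fun p q => (hreach p).symm.trans (hreach q)⟩
  · rintro (v | v)
    · obtain ⟨a, b, c, h1, h2, h3, h4, h5, h6⟩ := hq v
      exact ⟨_, _, _, hl _ _ h1, hl _ _ h2, hl _ _ h3, hl _ _ h4, hl _ _ h5, hl _ _ h6⟩
    · have : ∀ v : Fin 4, ∃ a b c, v ≠ a ∧ v ≠ b ∧ v ≠ c ∧ a ≠ b ∧ a ≠ c ∧ b ≠ c := by decide
      obtain ⟨a, b, c, h1, h2, h3, h4, h5, h6⟩ := this v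
      exact ⟨_, _, _, hr _ _ h1, hr _ _ h2, hr _ _ h3, hr _ _ h4, hr _ _ h5, hr _ _ h6⟩
  · have h1 : K.edgeSet.ncard ≤ H.edgeSet.ncard + (⊤ : SimpleGraph (Fin 4)).edgeSet.ncard + 1 := by
      rw [hK, edgeSet_sup, edgeSet_sup, edgeSet_map, edgeSet_map]
      refine (Set.ncard_union_le _ _).trans (Nat.add_le_add ((Set.ncard_union_le _ _).trans
        (Nat.add_le_add (Set.ncard_image_le (Set.toFinite _))
          (Set.ncard_image_le (Set.toFinite _)))) ?_)
      rw [edgeSet_edge_of_ne (by simp), Set.ncard_singleton]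
    have h2 : (⊤ : SimpleGraph (Fin 4)).edgeSet.ncard = 6 := by
      rw [Set.ncard_eq_toFinset_card', ← edgeFinset, card_edgeFinset_top_eq_card_choose_two]
      decide
    have h3 : hh (n + 4) = hh n + 3 := by
      unfold hh
      rw [Nat.add_mod_right, Nat.add_div_right _ (by norm_num)]
      omega
    omega

lemma good_base {n : ℕ} (L : Finset (Sym2 (Fin n))) (z : Fin n)
    (h1 : ∀ v, v ≠ z → s(z, v) ∈ L)
    (h2 : ∀ v, ∃ a b c, (s(v, a) ∈ L ∧ v ≠ a) ∧ (s(v, b) ∈ L ∧ v ≠ b) ∧ (s(v, c) ∈ L ∧ v ≠ c) ∧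
      (s(a, b) ∈ L ∧ a ≠ b) ∧ (s(a, c) ∈ L ∧ a ≠ c) ∧ (s(b, c) ∈ L ∧ b ≠ c))
    (h3 : L.card + 1 ≤ n + hh n) : Good n := by
  refine ⟨Fin n, inferInstance, fromEdgeSet (L : Set (Sym2 (Fin n))), by simp, ?_, ?_, ?_⟩
  · have hreach : ∀ p, (fromEdgeSet (L : Set (Sym2 (Fin n)))).Reachable z p := by
      intro p
      by_cases hp : p = z
      · rw [hp]
      · exact Adj.reachable ((fromEdgeSet_adj _).2 ⟨h1 p hp, fun h => hp h.symm⟩)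
    have : Nonempty (Fin n) := ⟨z⟩
    exact ⟨fun p q => (hreach p).symm.trans (hreach q)⟩
  · intro v
    obtain ⟨a, b, c, h⟩ := h2 v
    refine ⟨a, b, c, ?_⟩
    simpa only [fromEdgeSet_adj, Finset.mem_coe] using h
  · have : (fromEdgeSet (L : Set (Sym2 (Fin n)))).edgeSet.ncard ≤ L.card := by
      rw [edgeSet_fromEdgeSet, ← Set.ncard_coe_finset]
      exact Set.ncard_le_ncard Set.sdiff_subset (Set.toFinite _)
    omega

lemma good4 : Good 4 := good_base {s(0,1), s(0,2), s(0,3), s(1,2), s(1,3), s(2,3)} 0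
  (by decide) (by decide) (by decide)

lemma good5 : Good 5 := good_base {s(0,1), s(0,2), s(0,3), s(1,2), s(1,3), s(2,3),
    s(0,4), s(1,4), s(2,4)} 0
  (by decide) (by decide) (by decide)

lemma good6 : Good 6 := good_base {s(0,1), s(0,2), s(0,3), s(1,2), s(1,3), s(2,3),
    s(0,4), s(0,5), s(1,4), s(1,5), s(4,5)} 0
  (by decide) (by decide) (by decide)

lemma good7 : Good 7 := good_base {s(0,1), s(0,2), s(0,3), s(1,2), s(1,3), s(2,3),
    s(0,4), s(0,5), s(0,6), s(4,5), s(4,6), s(5,6)} 0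
  (by decide) (by decide) (by decide)

lemma good_all (n : ℕ) (hn : 4 ≤ n) : Good n := by
  induction n using Nat.strong_induction_on with
  | _ n ih =>
  by_cases h8 : 8 ≤ n
  · obtain ⟨m, rfl⟩ : ∃ m, n = m + 4 := ⟨n - 4, by omega⟩
    exact good_step (ih m (by omega) (by omega))
  · have : n = 4 ∨ n = 5 ∨ n = 6 ∨ n = 7 := by omega
    rcases this with rfl | rfl | rfl | rfl
    · exact good4
    · exact good5
    · exact good6
    · exact good7

lemma good_fin (n : ℕ) (hn : 4 ≤ n) : ∃ H : SimpleGraph (Fin n), H.Connected ∧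
    LocallyNonforesty H ∧ H.edgeSet.ncard + 1 ≤ n + hh n := by
  obtain ⟨V, _, H, hc, hcon, hq, he⟩ := good_all n hn
  have e : V ≃ Fin n := Fintype.equivFinOfCardEq hc
  have hadj : ∀ x y, H.Adj x y → (H.map e.toEmbedding).Adj (e x) (e y) := fun x y h =>
    ⟨fun e' => h.ne (e.injective e'), x, y, h, rfl, rfl⟩
  refine ⟨H.map e.toEmbedding, ?_, quad_nonforesty ?_, ?_⟩
  · exact (Iso.connected_iff (Iso.map e H)).1 hcon
  · intro v
    obtain ⟨v, rfl⟩ := e.surjective v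
    obtain ⟨a, b, c, h1, h2, h3, h4, h5, h6⟩ := hq v
    exact ⟨_, _, _, hadj _ _ h1, hadj _ _ h2, hadj _ _ h3, hadj _ _ h4, hadj _ _ h5, hadj _ _ h6⟩
  · rw [edgeSet_map]
    have := Set.ncard_image_le (f := e.toEmbedding.sym2Map) (Set.toFinite H.edgeSet)
    omega

end Foresty

theorem stmt_16 {V : Type*} [Fintype V] (G : SimpleGraph V) (n : ℕ)
    (hn : Fintype.card V = n) (h8 : 8 ≤ n)
    (hconn : G.Connected) (hloc : LocallyNonforesty G)
    -- `G` has minimum size among connected locally nonforesty graphs of order `n`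
    (hmin : ∀ H : SimpleGraph (Fin n), H.Connected → LocallyNonforesty H →
      G.edgeSet.ncard ≤ H.edgeSet.ncard) :
    ∀ B : Set V, IsBlock G B → B.ncard ≤ 6 := by
  intro B hB
  obtain ⟨H, h1, h2, h3⟩ := Foresty.good_fin n (by omega)
  have h4 := hmin H h1 h2
  refine Foresty.block_small hloc (fun k hk => ?_) hB.1 hB.2.1
  have := Foresty.nu_connected hconn hk
  rw [hn] at this ⊢
  omega
end

section
/- Let n ≥ 8 and let G be a connected locally nonforesty graph of order n whose size is minimum among all connected locally nonforesty graphs of order n. Then G has at most one block whose order is 5 or 6 (i.e., the number of blocks of order 5 plus the number of blocks of order 6 is at most 1). -/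
namespace LNF

open Finset

open Classical in
/-- number of neighbours of `v` in `D` -/
noncomputable def dg {V : Type*} (G : SimpleGraph V) (v : V) (D : Finset V) : ℕ :=
  #{a ∈ D | G.Adj v a}

open Classical in
/-- twice the number of edges inside `D` -/
noncomputable def ee {V : Type*} (G : SimpleGraph V) (D : Finset V) : ℕ :=
  #{p ∈ D ×ˢ D | G.Adj p.1 p.2}

/-- `v` has a cycle in its neighbourhood within `D` -/
def Sat {V : Type*} (G : SimpleGraph V) (v : V) (D : Finset V) : Prop :=
  ∃ R : Finset V, R.Nonempty ∧ R ⊆ D ∧ (∀ r ∈ R, G.Adj v r) ∧ ∀ r ∈ R, 2 ≤ dg G r R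

open Classical in
noncomputable def un {V : Type*} (G : SimpleGraph V) (D : Finset V) : ℕ :=
  #{v ∈ D | ¬ Sat G v D}

noncomputable def Psi {V : Type*} (G : SimpleGraph V) (D : Finset V) : ℤ :=
  2 * (ee G D : ℤ) + 4 - 7 * (#D : ℤ) + 3 * (un G D : ℤ)

def Conn {V : Type*} (G : SimpleGraph V) (D : Finset V) : Prop :=
  ∀ S ⊆ D, S.Nonempty → S ≠ D → ∃ s ∈ S, ∃ t ∈ D, t ∉ S ∧ G.Adj s t

section
variable {V : Type*} {G : SimpleGraph V}

lemma ee_eq (D : Finset V) : ee G D = ∑ v ∈ D, dg G v D := by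
  classical
  unfold ee dg
  simp only [Finset.card_filter]
  rw [Finset.sum_product]

lemma dg_insert [DecidableEq V] {x : V} {D : Finset V} (hx : x ∉ D) (v : V) [Decidable (G.Adj v x)] :
    dg G v (insert x D) = dg G v D + if G.Adj v x then 1 else 0 := by
  classical
  unfold dg
  rw [Finset.filter_insert]
  split_ifs with h
  · rw [Finset.card_insert_of_notMem]
    simp [hx]
  · simp

lemma ee_insert [DecidableEq V] {x : V} {D : Finset V} (hx : x ∉ D) :
    ee G (insert x D) = ee G D + 2 * dg G x D := by
  classical
  rw [ee_eq, ee_eq, Finset.sum_insert hx]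
  simp only [dg_insert hx, Finset.sum_add_distrib]
  have : (∑ v ∈ D, if G.Adj v x then 1 else 0) = dg G x D := by
    unfold dg
    rw [Finset.card_filter]
    simp only [G.adj_comm]
  rw [this]
  simp
  ring

lemma dg_mono {v : V} {S D : Finset V} (h : S ⊆ D) : dg G v S ≤ dg G v D := by
  classical
  exact Finset.card_le_card (Finset.filter_subset_filter _ h)

lemma ee_union [DecidableEq V] {S W : Finset V} (h : #(S ∩ W) ≤ 1) :
    ee G S + ee G W ≤ ee G (S ∪ W) := by
  classical
  unfold ee
  rw [← Finset.card_union_of_disjoint]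
  · apply Finset.card_le_card
    intro p
    simp only [Finset.mem_union, Finset.mem_filter, Finset.mem_product]
    tauto
  · rw [Finset.disjoint_left]
    rintro ⟨a, b⟩ h1 h2
    simp only [Finset.mem_filter, Finset.mem_product] at h1 h2
    rw [Finset.card_le_one] at h
    have := h a (by simp [h1.1.1, h2.1.1]) b (by simp [h1.1.2, h2.1.2])
    subst this
    exact G.irrefl h1.2

lemma dg_lt {R : Finset V} {r : V} (hr : r ∈ R) : dg G r R < #R := by
  classical
  unfold dg
  apply Finset.card_lt_card
  rw [Finset.ssubset_iff_of_subset (Finset.filter_subset _ _)]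
  exact ⟨r, hr, by simp⟩

lemma dg_eq_card {R : Finset V} {v : V} (h : ∀ r ∈ R, G.Adj v r) : dg G v R = #R := by
  classical
  unfold dg
  rw [Finset.filter_true_of_mem h]

lemma wheel_ee [DecidableEq V] {R : Finset V} {v : V} (hv : ∀ r ∈ R, G.Adj v r)
    (hR : ∀ r ∈ R, 2 ≤ dg G r R) : v ∉ R ∧ 4 * #R ≤ ee G (insert v R) := by
  have h : v ∉ R := fun h => G.irrefl (hv v h)
  refine ⟨h, ?_⟩
  rw [ee_insert h, dg_eq_card hv, ee_eq]
  have := Finset.card_nsmul_le_sum R (fun r => dg G r R) 2 hR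
  simp at this
  omega

lemma three_le {R : Finset V} (hne : R.Nonempty) (hR : ∀ r ∈ R, 2 ≤ dg G r R) : 3 ≤ #R := by
  obtain ⟨r, hr⟩ := hne
  have := hR r hr
  have := dg_lt (G := G) hr
  omega

lemma Sat.three_le_dg {v : V} {D : Finset V} (h : Sat G v D) : 3 ≤ dg G v D := by
  obtain ⟨R, h1, h2, h3, h4⟩ := h
  have := three_le h1 h4
  rw [← dg_eq_card h3] at this
  exact this.trans (dg_mono h2)

lemma Sat.k4 {v : V} {D : Finset V} (hv : v ∈ D) (h : Sat G v D) (h4 : dg G v D ≤ 3) :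
    ∃ Q ⊆ D, #Q = 4 ∧ 12 ≤ ee G Q := by
  classical
  obtain ⟨R, h1, h2, h3, h5⟩ := h
  have h6 := three_le h1 h5
  have h7 := dg_eq_card h3
  have h8 := dg_mono (G := G) (v := v) h2
  obtain ⟨h9, h10⟩ := wheel_ee h3 h5
  refine ⟨insert v R, Finset.insert_subset hv h2, ?_, ?_⟩
  · rw [Finset.card_insert_of_notMem h9]; omega
  · omega

lemma growth {D : Finset V} (hD : D.Nonempty) (hc : Conn G D) : 0 ≤ Psi G D := by
  classical
  let F : Finset V → ℤ := fun S =>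
    2 * (ee G S : ℤ) + 4 - 7 * (#S : ℤ) + 3 * (#{v ∈ S | ¬ Sat G v D} : ℤ)
  have hmono : ∀ S T : Finset V, S ⊆ T → #{v ∈ S | ¬ Sat G v D} ≤ #{v ∈ T | ¬ Sat G v D} :=
    fun S T h => Finset.card_le_card (Finset.filter_subset_filter _ h)
  let 𝒮 : Finset (Finset V) := {S ∈ D.powerset | S.Nonempty ∧ 0 ≤ F S}
  have hne : 𝒮.Nonempty := by
    by_cases hu : ∃ x ∈ D, ¬ Sat G x D
    · obtain ⟨x, hx, hxu⟩ := hu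
      refine ⟨{x}, ?_⟩
      have h1 : ({v ∈ ({x} : Finset V) | ¬ Sat G v D}) = {x} := by
        rw [Finset.filter_singleton, if_pos hxu]
      simp only [𝒮, Finset.mem_filter, Finset.mem_powerset, Finset.singleton_subset_iff, hx,
        true_and, F, h1]
      simp
      omega
    · push Not at hu
      obtain ⟨v, hv⟩ := hD
      obtain ⟨R, h1, h2, h3, h4⟩ := hu v hv
      obtain ⟨h5, h6⟩ := wheel_ee h3 h4
      have h7 := three_le h1 h4
      refine ⟨insert v R, ?_⟩
      simp only [𝒮, Finset.mem_filter, Finset.mem_powerset, F]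
      refine ⟨Finset.insert_subset hv h2, Finset.insert_nonempty _ _, ?_⟩
      rw [Finset.card_insert_of_notMem h5]
      push_cast
      omega
  obtain ⟨S, hS, hmax⟩ := Finset.exists_max_image 𝒮 Finset.card hne
  have hmax' : ∀ T ⊆ D, S ⊆ T → 0 ≤ F T → T = S := by
    intro T hTD hST hT
    have hS' := hS
    simp only [𝒮, Finset.mem_filter, Finset.mem_powerset] at hS'
    have := hmax T (by
      simp only [𝒮, Finset.mem_filter, Finset.mem_powerset]
      exact ⟨hTD, hS'.2.1.mono hST, hT⟩)
    exact (Finset.eq_of_subset_of_card_le hST this).symm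
  simp only [𝒮, Finset.mem_filter, Finset.mem_powerset] at hS
  obtain ⟨hSD, hSne, hSF⟩ := hS
  by_cases hEq : S = D
  · subst hEq
    exact hSF
  exfalso
  obtain ⟨s, hs, v, hvD, hvS, hadj⟩ := hc S hSD hSne hEq
  have key : ∀ w ∈ D, w ∉ S → dg G w S ≤ 1 := by
    intro w hwD hwS
    by_contra hlt
    have := hmax' (insert w S) (Finset.insert_subset hwD hSD) (Finset.subset_insert _ _) (by
      have := hmono S (insert w S) (Finset.subset_insert _ _)
      simp only [F] at hSF ⊢
      rw [ee_insert hwS, Finset.card_insert_of_notMem hwS]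
      push_cast
      omega)
    exact hwS (this ▸ Finset.mem_insert_self _ _)
  have hpos : 1 ≤ dg G v S := by
    unfold dg
    exact Finset.card_pos.2 ⟨s, by simp [hs, hadj.symm]⟩
  have hsat : Sat G v D := by
    by_contra hu
    have := hmax' (insert v S) (Finset.insert_subset hvD hSD) (Finset.subset_insert _ _) (by
      have h1 : #{v ∈ insert v S | ¬ Sat G v D} = #{v ∈ S | ¬ Sat G v D} + 1 := by
        rw [Finset.filter_insert, if_pos hu, Finset.card_insert_of_notMem]
        simp [hvS]
      simp only [F] at hSF ⊢
      rw [ee_insert hvS, Finset.card_insert_of_notMem hvS, h1]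
      push_cast
      omega)
    exact hvS (this ▸ Finset.mem_insert_self _ _)
  obtain ⟨R, h1, h2, h3, h4⟩ := hsat
  obtain ⟨h5, h6⟩ := wheel_ee h3 h4
  have h7 := three_le h1 h4
  have hRS : #(S ∩ R) ≤ 1 := by
    refine le_trans ?_ (key v hvD hvS)
    unfold dg
    apply Finset.card_le_card
    intro a
    simp only [Finset.mem_inter, Finset.mem_filter]
    exact fun h => ⟨h.1, h3 a h.2⟩
  have hi : S ∩ insert v R = S ∩ R := by
    rw [Finset.inter_insert_of_notMem hvS]
  have hm := hmono S (S ∪ insert v R) Finset.subset_union_left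
  have := hmax' (S ∪ insert v R) (Finset.union_subset hSD (Finset.insert_subset hvD h2))
    Finset.subset_union_left (by
      simp only [F] at hSF ⊢
      have hcard := Finset.card_union_add_card_inter S (insert v R)
      rw [hi, Finset.card_insert_of_notMem h5] at hcard
      rcases Nat.lt_or_ge 0 #(S ∩ R) with hj | hj
      · have := ee_union (G := G) (S := S) (W := insert v R) (by rw [hi]; exact hRS)
        omega
      · have h0 : S ∩ R = ∅ := by rw [← Finset.card_eq_zero]; omega
        have h8 : insert v S ∩ insert v R = {v} := by
          rw [← Finset.insert_inter_distrib, h0, Finset.insert_empty]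
        have := ee_union (G := G) (S := insert v S) (W := insert v R) (by rw [h8]; simp)
        have h9 : insert v S ∪ insert v R = S ∪ insert v R := by
          ext a; simp only [Finset.mem_union, Finset.mem_insert]; tauto
        rw [h9, ee_insert hvS] at this
        omega)
  exact hvS (this ▸ Finset.mem_union_right _ (Finset.mem_insert_self _ _))

lemma un_pos {D : Finset V} {x : V} (hx : x ∈ D) (h : dg G x D ≤ 2) : ¬ Sat G x D := by
  intro hs
  have := hs.three_le_dg
  omega

lemma block56 {D : Finset V} (hD : #D = 5 ∨ #D = 6) (h2 : ∀ v ∈ D, 2 ≤ dg G v D) :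
    4 ≤ Psi G D := by
  classical
  by_cases hQ : ∃ Q ⊆ D, #Q = 4 ∧ 12 ≤ ee G Q
  · obtain ⟨Q, hQD, hQ4, hQe⟩ := hQ
    have hsd := Finset.card_sdiff_add_card_eq_card hQD
    have hU : Q ∪ (D \ Q) = D := Finset.union_sdiff_of_subset hQD
    rcases hD with hD | hD
    · have : #(D \ Q) = 1 := by omega
      obtain ⟨x, hx⟩ := Finset.card_eq_one.1 this
      have hxQ : x ∈ D \ Q := by rw [hx]; simp
      rw [Finset.mem_sdiff] at hxQ
      have hDe : D = insert x Q := by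
        rw [← hU, hx]; ext; simp
      have hd : dg G x D = dg G x Q := by
        rw [hDe, dg_insert hxQ.2]; simp
      have he : ee G D = ee G Q + 2 * dg G x Q := by rw [hDe, ee_insert hxQ.2]
      have hx2 := h2 x hxQ.1
      have hu : dg G x D ≤ 2 → 1 ≤ un G D := by
        intro h
        exact Finset.card_pos.2 ⟨x, by simp [hxQ.1, un_pos hxQ.1 h]⟩
      unfold Psi
      rcases Nat.lt_or_ge 2 (dg G x D) with h | h
      · omega
      · have := hu h
        omega
    · have : #(D \ Q) = 2 := by omega
      obtain ⟨x, y, hxy, hx⟩ := Finset.card_eq_two.1 this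
      have hxQ : x ∈ D \ Q := by rw [hx]; simp
      have hyQ : y ∈ D \ Q := by rw [hx]; simp
      rw [Finset.mem_sdiff] at hxQ hyQ
      have hDe : D = insert x (insert y Q) := by
        rw [← hU, hx]; ext; simp
      have hx' : x ∉ insert y Q := by simp [hxy, hxQ.2]
      have hdx : dg G x D = dg G x Q + if G.Adj x y then 1 else 0 := by
        rw [hDe, dg_insert hx', dg_insert hyQ.2]; simp
      have hdy : dg G y D = dg G y Q + if G.Adj x y then 1 else 0 := by
        rw [hDe, dg_insert hx', dg_insert hyQ.2]; simp [G.adj_comm]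
      have he : ee G D = ee G Q + 2 * dg G y Q + 2 * dg G x D := by
        rw [hdx, hDe, ee_insert hx', ee_insert hyQ.2, dg_insert hyQ.2]
      have hx2 := h2 x hxQ.1
      have hy2 := h2 y hyQ.1
      have hux : dg G x D ≤ 2 → 1 ≤ un G D := by
        intro h
        exact Finset.card_pos.2 ⟨x, by simp [hxQ.1, un_pos hxQ.1 h]⟩
      have huy : dg G y D ≤ 2 → 1 ≤ un G D := by
        intro h
        exact Finset.card_pos.2 ⟨y, by simp [hyQ.1, un_pos hyQ.1 h]⟩
      have huxy : dg G x D ≤ 2 → dg G y D ≤ 2 → 2 ≤ un G D := by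
        intro h h'
        rw [← Finset.card_pair hxy]
        apply Finset.card_le_card
        intro z
        simp only [Finset.mem_insert, Finset.mem_singleton, Finset.mem_filter]
        rintro (rfl | rfl)
        · exact ⟨hxQ.1, un_pos hxQ.1 h⟩
        · exact ⟨hyQ.1, un_pos hyQ.1 h'⟩
      unfold Psi
      generalize un G D = u at *
      split_ifs at hdx hdy <;> omega
  · have h : ∀ v ∈ D, 7 ≤ 2 * dg G v D + 3 * if ¬ Sat G v D then 1 else 0 := by
      intro v hv
      have := h2 v hv
      by_cases hs : Sat G v D
      · have : ¬ dg G v D ≤ 3 := fun h => hQ (hs.k4 hv h)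
        simp only [hs]
        simp
        omega
      · simp only [hs]
        simp
        omega
    have h' := Finset.card_nsmul_le_sum D _ 7 h
    rw [Finset.sum_add_distrib, ← Finset.mul_sum, ← Finset.mul_sum, ← ee_eq,
      ← Finset.card_filter] at h'
    unfold Psi un
    simp at h' ⊢
    omega

lemma split_un [DecidableEq V] {D1 D2 : Finset V} {x : V} (h1 : D1 ∩ D2 = {x})
    (hno : ∀ a ∈ D1, ∀ b ∈ D2, a ≠ x → b ≠ x → ¬ G.Adj a b) :
    un G D1 + un G D2 ≤ un G (D1 ∪ D2) + 1 := by
  classical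
  have hx : x ∈ D1 ∧ x ∈ D2 := by rw [← Finset.mem_inter, h1]; simp
  have hu : ∀ a ∈ D1, a ∈ D2 → a = x := by
    intro a ha hb
    have : a ∈ D1 ∩ D2 := Finset.mem_inter.2 ⟨ha, hb⟩
    rw [h1] at this
    simpa using this
  have s1 : ∀ v ∈ D1, v ≠ x → Sat G v (D1 ∪ D2) → Sat G v D1 := by
    rintro v hv hvx ⟨R, h1, h2, h3, h4⟩
    refine ⟨R, h1, ?_, h3, h4⟩
    intro r hr
    by_contra hn
    have hr2 : r ∈ D2 := by have := h2 hr; simp [hn] at this; exact this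
    exact hno v hv r hr2 hvx (fun h => hn (h ▸ hx.1)) (h3 r hr)
  have s2 : ∀ v ∈ D2, v ≠ x → Sat G v (D1 ∪ D2) → Sat G v D2 := by
    rintro v hv hvx ⟨R, h1, h2, h3, h4⟩
    refine ⟨R, h1, ?_, h3, h4⟩
    intro r hr
    by_contra hn
    have hr2 : r ∈ D1 := by have := h2 hr; simp [hn] at this; exact this
    exact hno r hr2 v hv (fun h => hn (h ▸ hx.2)) hvx (h3 r hr).symm
  have s3 : Sat G x (D1 ∪ D2) → Sat G x D1 ∨ Sat G x D2 := by
    rintro ⟨R, h1, h2, h3, h4⟩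
    have hxR : ∀ r ∈ R, r ≠ x := fun r hr h => G.irrefl (h ▸ h3 r hr)
    by_cases hne : (R ∩ D1).Nonempty
    · left
      refine ⟨R ∩ D1, hne, Finset.inter_subset_right,
        fun r hr => h3 r (Finset.mem_inter.1 hr).1, ?_⟩
      intro r hr
      rw [Finset.mem_inter] at hr
      refine (h4 r hr.1).trans (Finset.card_le_card ?_)
      intro a
      simp only [Finset.mem_filter, Finset.mem_inter]
      rintro ⟨ha, hra⟩
      refine ⟨⟨ha, ?_⟩, hra⟩
      by_contra hn
      have ha2 : a ∈ D2 := by have := h2 ha; simp [hn] at this; exact this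
      exact hno r hr.2 a ha2 (hxR r hr.1) (hxR a ha) hra
    · right
      refine ⟨R, h1, ?_, h3, h4⟩
      intro r hr
      have := h2 hr
      rw [Finset.mem_union] at this
      rcases this with h | h
      · exact absurd ⟨r, Finset.mem_inter.2 ⟨hr, h⟩⟩ hne
      · exact h
  unfold un
  set U1 := ({v ∈ D1 | ¬ Sat G v D1} : Finset V) with hU1
  set U2 := ({v ∈ D2 | ¬ Sat G v D2} : Finset V) with hU2
  have hi : U1 ∩ U2 ⊆ {x} := by
    intro a
    simp only [hU1, hU2, Finset.mem_inter, Finset.mem_filter, Finset.mem_singleton]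
    exact fun h => hu a h.1.1 h.2.1
  have hcu := Finset.card_union_add_card_inter U1 U2
  by_cases hxx : x ∈ U1 ∩ U2
  · have : #(U1 ∪ U2) ≤ #{v ∈ D1 ∪ D2 | ¬ Sat G v (D1 ∪ D2)} := by
      apply Finset.card_le_card
      intro a
      simp only [hU1, hU2, Finset.mem_inter, Finset.mem_filter, Finset.mem_union] at hxx ⊢
      by_cases hax : a = x
      · subst hax
        intro _
        refine ⟨Or.inl hx.1, fun h => ?_⟩
        have := s3 h
        tauto
      · rintro (⟨h, h'⟩ | ⟨h, h'⟩)
        · exact ⟨Or.inl h, fun hh => h' (s1 a h hax hh)⟩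
        · exact ⟨Or.inr h, fun hh => h' (s2 a h hax hh)⟩
    have := Finset.card_le_card hi
    simp at this
    omega
  · have h0 : U1 ∩ U2 = ∅ := by
      rw [Finset.eq_empty_iff_forall_notMem]
      intro a ha
      have := hi ha
      rw [Finset.mem_singleton] at this
      exact hxx (this ▸ ha)
    have : #((U1 ∪ U2).erase x) ≤ #{v ∈ D1 ∪ D2 | ¬ Sat G v (D1 ∪ D2)} := by
      apply Finset.card_le_card
      intro a
      simp only [hU1, hU2, Finset.mem_erase, Finset.mem_filter, Finset.mem_union]
      rintro ⟨hax, ⟨h, h'⟩ | ⟨h, h'⟩⟩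
      · exact ⟨Or.inl h, fun hh => h' (s1 a h hax hh)⟩
      · exact ⟨Or.inr h, fun hh => h' (s2 a h hax hh)⟩
    have h3 := Finset.pred_card_le_card_erase (s := U1 ∪ U2) (a := x)
    rw [h0] at hcu
    simp at hcu
    omega

lemma split_psi [DecidableEq V] {D1 D2 : Finset V} {x : V} (h1 : D1 ∩ D2 = {x})
    (hno : ∀ a ∈ D1, ∀ b ∈ D2, a ≠ x → b ≠ x → ¬ G.Adj a b) :
    Psi G D1 + Psi G D2 ≤ Psi G (D1 ∪ D2) := by
  have hu := split_un h1 hno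
  have he := ee_union (G := G) (S := D1) (W := D2) (by rw [h1]; simp)
  have hc := Finset.card_union_add_card_inter D1 D2
  rw [h1] at hc
  simp at hc
  unfold Psi
  omega

lemma split_conn [DecidableEq V] {D1 D2 : Finset V} {x : V} (hx1 : x ∈ D1) (hx2 : x ∈ D2)
    (h1 : ∀ a ∈ D1, a ∈ D2 → a = x)
    (hno : ∀ a ∈ D1, ∀ b ∈ D2, a ≠ x → b ≠ x → ¬ G.Adj a b) (hc : Conn G (D1 ∪ D2)) :
    Conn G D1 := by
  intro S hS hne hneq
  by_cases hxS : x ∈ S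
  · obtain ⟨s, hs, t, ht, hts, hadj⟩ := hc (S ∪ D2) (Finset.union_subset_union_left hS)
      (hne.mono Finset.subset_union_left) (by
        intro h
        apply hneq
        apply Finset.Subset.antisymm hS
        intro a ha
        have : a ∈ S ∪ D2 := by rw [h]; simp [ha]
        rw [Finset.mem_union] at this
        rcases this with h | h
        · exact h
        · rw [h1 a ha h]; exact hxS)
    rw [Finset.mem_union] at hs ht hts
    push Not at hts
    have htD : t ∈ D1 := ht.resolve_right hts.2
    refine ⟨s, ?_, t, htD, hts.1, hadj⟩
    rcases hs with hs | hs
    · exact hs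
    · by_cases hsx : s = x
      · rw [hsx]; exact hxS
      · exact absurd hadj.symm (hno t htD s hs (fun h => hts.1 (h ▸ hxS)) hsx)
  · obtain ⟨s, hs, t, ht, hts, hadj⟩ := hc S (hS.trans Finset.subset_union_left) hne (by
      intro h
      exact hxS (h ▸ Finset.mem_union_left _ hx1))
    refine ⟨s, hs, t, ?_, hts, hadj⟩
    rw [Finset.mem_union] at ht
    rcases ht with h | h
    · exact h
    · by_cases htx : t = x
      · rw [htx]; exact hx1
      · exact absurd hadj (hno s (hS hs) t h (fun h => hxS (h ▸ hs)) htx)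

/-- finset version of blocks of order 5 or 6 -/
def Blk [DecidableEq V] (G : SimpleGraph V) (B : Finset V) : Prop :=
  (#B = 5 ∨ #B = 6) ∧ Conn G B ∧ (∀ v ∈ B, Conn G (B.erase v)) ∧
    ∀ C : Finset V, B ⊆ C → Conn G C → (∀ v ∈ C, Conn G (C.erase v)) → C = B

lemma Blk.side [DecidableEq V] {D1 D2 B : Finset V} {x : V} (hB : Blk G B)
    (hx1 : x ∈ D1) (hx2 : x ∈ D2)
    (hno : ∀ a ∈ D1, ∀ b ∈ D2, a ≠ x → b ≠ x → ¬ G.Adj a b) (hBD : B ⊆ D1 ∪ D2) :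
    B ⊆ D1 ∨ B ⊆ D2 := by
  have hc : Conn G (B.erase x) := by
    by_cases hx : x ∈ B
    · exact hB.2.2.1 x hx
    · rw [Finset.erase_eq_of_notMem hx]; exact hB.2.1
  by_contra hcon
  push Not at hcon
  rw [Finset.not_subset, Finset.not_subset] at hcon
  obtain ⟨⟨a, ha, ha1⟩, b, hb, hb2⟩ := hcon
  have hb1 : b ∈ D1 := by have := hBD hb; simp [hb2] at this; exact this
  have hbx : b ≠ x := fun h => hb2 (h ▸ hx2)
  have hax : a ≠ x := fun h => ha1 (h ▸ hx1)
  obtain ⟨s, hs, t, ht, hts, hadj⟩ := hc (B.erase x ∩ D1) Finset.inter_subset_left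
    ⟨b, by simp [hb, hbx, hb1]⟩ (by
      intro h
      have : a ∈ B.erase x ∩ D1 := by rw [h]; simp [hax, ha]
      simp [ha1] at this)
  simp only [Finset.mem_inter, Finset.mem_erase] at hs ht hts
  have ht1 : t ∉ D1 := fun h => hts ⟨ht, h⟩
  have ht2 : t ∈ D2 := by have := hBD ht.2; simp [ht1] at this; exact this
  exact hno s hs.2 t ht2 hs.1.1 ht.1 hadj

lemma deg_two [DecidableEq V] {D : Finset V} (hcard : 3 ≤ #D) (hc : Conn G D)
    (hcut : ∀ v ∈ D, Conn G (D.erase v)) : ∀ v ∈ D, 2 ≤ dg G v D := by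
  classical
  intro v hv
  obtain ⟨s, hs, t, ht, hts, hadj⟩ := hc {v} (by simpa using hv) (by simp) (by
    intro h; rw [← h] at hcard; simp at hcard)
  rw [Finset.mem_singleton] at hs
  subst hs
  have hts' : s ≠ t := fun h => hts (by simp [h])
  obtain ⟨s', hs', t', ht', hts2, hadj'⟩ := hcut t ht {s} (by simp [hts', hv]) (by simp) (by
    intro h
    have := Finset.card_erase_of_mem ht
    rw [← h] at this; simp at this; omega)
  rw [Finset.mem_singleton] at hs'
  subst hs'
  rw [Finset.mem_erase] at ht'
  rw [← Finset.card_pair ht'.1]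
  unfold dg
  apply Finset.card_le_card
  intro z
  simp only [Finset.mem_insert, Finset.mem_singleton, Finset.mem_filter]
  rintro (rfl | rfl)
  · exact ⟨ht'.2, hadj'⟩
  · exact ⟨ht, hadj⟩

lemma main [DecidableEq V] (N : ℕ) : ∀ D : Finset V, #D ≤ N → D.Nonempty → Conn G D →
    ∀ 𝓑 : Finset (Finset V), (∀ B ∈ 𝓑, Blk G B ∧ B ⊆ D) → 4 * (#𝓑 : ℤ) ≤ Psi G D := by
  induction N with
  | zero =>
    intro D h hne
    have := Finset.card_pos.2 hne
    omega
  | succ N ih =>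
    intro D hDN hne hc 𝓑 h𝓑
    by_cases hcut : ∀ v ∈ D, Conn G (D.erase v)
    · have hall : ∀ B ∈ 𝓑, B = D := fun B hB =>
        ((h𝓑 B hB).1.2.2.2 D (h𝓑 B hB).2 hc hcut).symm
      rcases 𝓑.eq_empty_or_nonempty with h | ⟨B, hB⟩
      · subst h
        simpa using growth hne hc
      · have hBD := hall B hB
        subst hBD
        have h5 := (h𝓑 B hB).1.1
        have h4 := block56 h5 (deg_two (by omega) hc hcut)
        have : 𝓑 ⊆ {B} := fun C hC => by simpa using hall C hC
        have := Finset.card_le_card this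
        simp at this
        omega
    · push Not at hcut
      obtain ⟨x, hx, hnc⟩ := hcut
      unfold Conn at hnc
      push Not at hnc
      obtain ⟨S, hSD, hSne, hSneq, hSno⟩ := hnc
      have hxS : x ∉ S := fun h => by simpa using hSD h
      have hSD' : S ⊆ D := hSD.trans (Finset.erase_subset _ _)
      obtain ⟨b, hb, hbS⟩ : ∃ b ∈ D.erase x, b ∉ S := by
        by_contra hcon
        push Not at hcon
        exact hSneq (Finset.Subset.antisymm hSD hcon)
      rw [Finset.mem_erase] at hb
      set D1 := insert x S with hD1
      set D2 := D \ S with hD2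
      have hU : D1 ∪ D2 = D := by
        ext a
        simp only [hD1, hD2, Finset.mem_union, Finset.mem_insert, Finset.mem_sdiff]
        constructor
        · rintro ((rfl | h) | h)
          · exact hx
          · exact hSD' h
          · exact h.1
        · tauto
      have hI : D1 ∩ D2 = {x} := by
        ext a
        simp only [hD1, hD2, Finset.mem_inter, Finset.mem_insert, Finset.mem_sdiff,
          Finset.mem_singleton]
        constructor
        · tauto
        · rintro rfl; exact ⟨Or.inl rfl, hx, hxS⟩
      have hno : ∀ a ∈ D1, ∀ b ∈ D2, a ≠ x → b ≠ x → ¬ G.Adj a b := by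
        intro a ha b hb hax hbx
        simp only [hD1, hD2, Finset.mem_insert, Finset.mem_sdiff] at ha hb
        exact hSno a (ha.resolve_left hax) b (by simp [hbx, hb.1]) hb.2
      have hx1 : x ∈ D1 := by simp [hD1]
      have hx2 : x ∈ D2 := by simp [hD2, hx, hxS]
      have hu : ∀ a ∈ D1, a ∈ D2 → a = x := by
        intro a ha hb
        have : a ∈ D1 ∩ D2 := Finset.mem_inter.2 ⟨ha, hb⟩
        rw [hI] at this
        simpa using this
      have hc1 : Conn G D1 := split_conn hx1 hx2 hu hno (by rw [hU]; exact hc)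
      have hc2 : Conn G D2 := split_conn hx2 hx1 (fun a h h' => hu a h' h)
        (fun a ha b hb hax hbx h => hno b hb a ha hbx hax h.symm)
        (by rw [Finset.union_comm, hU]; exact hc)
      have hl1 : #D1 < #D := by
        apply Finset.card_lt_card
        rw [Finset.ssubset_iff_of_subset (hU ▸ Finset.subset_union_left)]
        exact ⟨b, hb.2, by simp [hD1, hb.1, hbS]⟩
      have hl2 : #D2 < #D := by
        apply Finset.card_lt_card
        rw [Finset.ssubset_iff_of_subset (hU ▸ Finset.subset_union_right)]
        obtain ⟨a, ha⟩ := hSne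
        exact ⟨a, hSD' ha, by simp [hD2, ha]⟩
      have i1 := ih D1 (by omega) ⟨x, hx1⟩ hc1 {B ∈ 𝓑 | B ⊆ D1} (by
        intro B hB
        rw [Finset.mem_filter] at hB
        exact ⟨(h𝓑 B hB.1).1, hB.2⟩)
      have i2 := ih D2 (by omega) ⟨x, hx2⟩ hc2 {B ∈ 𝓑 | B ⊆ D2} (by
        intro B hB
        rw [Finset.mem_filter] at hB
        exact ⟨(h𝓑 B hB.1).1, hB.2⟩)
      have hsp := split_psi hI hno
      rw [hU] at hsp
      have hcov : 𝓑 ⊆ {B ∈ 𝓑 | B ⊆ D1} ∪ {B ∈ 𝓑 | B ⊆ D2} := by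
        intro B hB
        have := (h𝓑 B hB).1.side hx1 hx2 hno (by rw [hU]; exact (h𝓑 B hB).2)
        simp only [Finset.mem_union, Finset.mem_filter]
        tauto
      have := (Finset.card_le_card hcov).trans (Finset.card_union_le _ _)
      omega

end
end LNF
namespace LNF
open Finset
section
variable {V : Type*} {G : SimpleGraph V}

lemma conn_of_pre {D : Finset V} (h : (G.induce (D : Set V)).Preconnected) : Conn G D := by
  classical
  intro S hS ⟨s, hs⟩ hneq
  obtain ⟨t, ht, htS⟩ : ∃ b ∈ D, b ∉ S := by
    by_contra hcon
    push Not at hcon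
    exact hneq (Finset.Subset.antisymm hS hcon)
  obtain ⟨p⟩ := h ⟨s, hS hs⟩ ⟨t, ht⟩
  obtain ⟨d, -, h1, h2⟩ := p.exists_boundary_dart {a | (a : V) ∈ S} hs htS
  exact ⟨d.fst, h1, d.snd, d.snd.2, h2, d.adj⟩

lemma pre_of_conn {D : Finset V} (h : Conn G D) : (G.induce (D : Set V)).Preconnected := by
  classical
  intro a b
  let S : Finset V := {x ∈ D | ∃ hx : x ∈ (D : Set V), (G.induce (D : Set V)).Reachable a ⟨x, hx⟩}
  have hS : S = D := by
    by_contra hneq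
    obtain ⟨s, hs, t, ht, hts, hadj⟩ := h S (Finset.filter_subset _ _)
      ⟨a, by simp [S]⟩ hneq
    apply hts
    simp only [S, Finset.mem_filter] at hs ⊢
    obtain ⟨hsD, hs', hr⟩ := hs
    refine ⟨ht, ht, hr.trans (SimpleGraph.Adj.reachable ?_)⟩
    exact hadj
  have hb : (b : V) ∈ S := by rw [hS]; exact b.2
  simp only [S, Finset.mem_filter] at hb
  exact hb.2.2

lemma blk_of_block [Fintype V] [DecidableEq V] {B : Finset V} (h : IsBlock G (B : Set V))
    (h5 : #B = 5 ∨ #B = 6) : Blk G B := by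
  obtain ⟨h1, h2, h3⟩ := h
  refine ⟨h5, conn_of_pre h1.preconnected, ?_, ?_⟩
  · intro v hv
    apply conn_of_pre
    rw [Finset.coe_erase]
    exact h2 v hv
  · intro C hBC hC hcut
    have := h3 C (by exact_mod_cast hBC) (by
      obtain ⟨b⟩ := h1.nonempty
      exact { preconnected := pre_of_conn hC, nonempty := ⟨⟨b, hBC b.2⟩⟩ }) (by
      intro v hv
      rw [← Finset.coe_erase]
      exact pre_of_conn (hcut v hv))
    exact_mod_cast this

lemma sat_of [Fintype V] {v : V} (h : ¬ (G.induce (G.neighborSet v)).IsAcyclic) :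
    Sat G v Finset.univ := by
  classical
  unfold SimpleGraph.IsAcyclic at h
  push Not at h
  obtain ⟨w, c, hc⟩ := h
  refine ⟨c.support.toFinset.image Subtype.val, ⟨w, ?_⟩, Finset.subset_univ _, ?_, ?_⟩
  · exact Finset.mem_image.2 ⟨w, by simp, rfl⟩
  · intro r hr
    simp only [Finset.mem_image] at hr
    obtain ⟨x, -, rfl⟩ := hr
    exact x.2
  · intro r hr
    simp only [Finset.mem_image, List.mem_toFinset] at hr
    obtain ⟨x, hx, rfl⟩ := hr
    have := hc.ncard_neighborSet_toSubgraph_eq_two hx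
    rw [← this, ← Set.ncard_image_of_injective _ Subtype.val_injective]
    unfold dg
    rw [← Set.ncard_coe_finset]
    apply Set.ncard_le_ncard _ (Finset.finite_toSet _)
    rintro _ ⟨y, hy, rfl⟩
    simp only [SimpleGraph.Subgraph.mem_neighborSet] at hy
    have h1 := hy.adj_sub
    have h2 := hy.snd_mem
    rw [SimpleGraph.Walk.mem_verts_toSubgraph] at h2
    simp only [Finset.coe_filter, Finset.mem_image, List.mem_toFinset, Set.mem_ofPred_eq]
    exact ⟨⟨y, h2, rfl⟩, h1⟩

lemma ee_univ [Fintype V] : ee G Finset.univ = 2 * G.edgeSet.ncard := by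
  classical
  rw [ee_eq]
  have := G.sum_degrees_eq_twice_card_edges
  rw [← SimpleGraph.coe_edgeFinset, Set.ncard_coe_finset, ← this]
  apply Finset.sum_congr rfl
  intro v _
  unfold dg
  rw [← SimpleGraph.card_neighborFinset_eq_degree]
  congr 1
  ext a
  simp

/-- every vertex lies in a `K₄` -/
def K4cov {V : Type*} (G : SimpleGraph V) : Prop :=
  ∀ v, ∃ a b c, G.Adj v a ∧ G.Adj v b ∧ G.Adj v c ∧ G.Adj a b ∧ G.Adj b c ∧ G.Adj a c

lemma K4cov.lnf (h : K4cov G) : LocallyNonforesty G := by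
  intro v hac
  obtain ⟨a, b, c, ha, hb, hc, hab, hbc, hca⟩ := h v
  let a' : G.neighborSet v := ⟨a, ha⟩
  let b' : G.neighborSet v := ⟨b, hb⟩
  let c' : G.neighborSet v := ⟨c, hc⟩
  have h1 : (G.induce (G.neighborSet v)).Adj a' b' := hab
  have h2 : (G.induce (G.neighborSet v)).Adj b' c' := hbc
  have h3 : (G.induce (G.neighborSet v)).Adj c' a' := hca.symm
  refine hac (SimpleGraph.Walk.cons h1 (SimpleGraph.Walk.cons h2 (SimpleGraph.Walk.cons h3 .nil))) ?_
  rw [SimpleGraph.Walk.cons_isCycle_iff]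
  have e1 := h1.ne
  have e2 := h2.ne
  have e3 := h3.ne
  simp [SimpleGraph.Walk.cons_isPath_iff, e1, e2, e3, e1.symm, e2.symm, e3.symm]

def Good (n : ℕ) (W : Type) : Prop := ∃ H : SimpleGraph W, H.Connected ∧ K4cov H ∧
    4 * H.edgeSet.ncard ≤ 7 * n + 3

lemma Good.equiv {n : ℕ} {W W' : Type} (e : W ≃ W') (h : Good n W) : Good n W' := by
  obtain ⟨H, h1, h2, h3⟩ := h
  let i := SimpleGraph.Iso.map e H
  refine ⟨H.map e.toEmbedding, i.connected_iff.1 h1, ?_, ?_⟩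
  · intro v
    obtain ⟨a, b, c, h⟩ := h2 (e.symm v)
    refine ⟨e a, e b, e c, ?_⟩
    have hv : v = e.toEmbedding (e.symm v) := by simp
    rw [hv]
    simp only [← Equiv.coe_toEmbedding, SimpleGraph.map_adj_apply]
    exact h
  · rw [SimpleGraph.edgeSet_map, Set.ncard_image_of_injective _ (Function.Embedding.injective _)]
    exact h3

lemma Good.step {n : ℕ} {W : Type} [Finite W] (h : Good n W) : Good (n + 4) (W ⊕ Fin 4) := by
  classical
  obtain ⟨H, h1, h2, h3⟩ := h
  obtain ⟨w⟩ := h1.nonempty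
  let A : SimpleGraph (W ⊕ Fin 4) := H.map Function.Embedding.inl
  let B : SimpleGraph (W ⊕ Fin 4) := (⊤ : SimpleGraph (Fin 4)).map Function.Embedding.inr
  let E : SimpleGraph (W ⊕ Fin 4) := SimpleGraph.edge (Sum.inl w) (Sum.inr 0)
  have hA : ∀ a b, H.Adj a b → (A ⊔ B ⊔ E).Adj (Sum.inl a) (Sum.inl b) := by
    intro a b hab
    left; left
    exact (SimpleGraph.map_adj_apply (f := Function.Embedding.inl)).2 hab
  have hB : ∀ a b : Fin 4, a ≠ b → (A ⊔ B ⊔ E).Adj (Sum.inr a) (Sum.inr b) := by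
    intro a b hab
    left; right
    exact (SimpleGraph.map_adj_apply (f := Function.Embedding.inr)).2 hab
  have hE : (A ⊔ B ⊔ E).Adj (Sum.inl w) (Sum.inr 0) := by
    right
    simp [E, SimpleGraph.edge_adj]
  refine ⟨A ⊔ B ⊔ E, ?_, ?_, ?_⟩
  · rw [SimpleGraph.connected_iff_exists_forall_reachable]
    refine ⟨Sum.inl w, ?_⟩
    rintro (a | a)
    · let f : H →g (A ⊔ B ⊔ E) := ⟨Sum.inl, fun {a b} h => hA a b h⟩
      exact (h1.preconnected w a).map f
    · refine hE.reachable.trans ?_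
      by_cases h : (0 : Fin 4) = a
      · rw [h]
      · exact (hB _ _ h).reachable
  · rintro (v | v)
    · obtain ⟨a, b, c, g1, g2, g3, g4, g5, g6⟩ := h2 v
      exact ⟨_, _, _, hA _ _ g1, hA _ _ g2, hA _ _ g3, hA _ _ g4, hA _ _ g5, hA _ _ g6⟩
    · obtain ⟨a, b, c, g1, g2, g3, g4, g5, g6⟩ : ∃ a b c : Fin 4, v ≠ a ∧ v ≠ b ∧ v ≠ c ∧
        a ≠ b ∧ b ≠ c ∧ a ≠ c := by revert v; decide
      exact ⟨_, _, _, hB _ _ g1, hB _ _ g2, hB _ _ g3, hB _ _ g4, hB _ _ g5, hB _ _ g6⟩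
  · rw [SimpleGraph.edgeSet_sup, SimpleGraph.edgeSet_sup]
    have e1 := Set.ncard_union_le (A.edgeSet ∪ B.edgeSet) E.edgeSet
    have e2 := Set.ncard_union_le A.edgeSet B.edgeSet
    have e3 : A.edgeSet.ncard = H.edgeSet.ncard := by
      simp only [A]
      rw [SimpleGraph.edgeSet_map, Set.ncard_image_of_injective _ (Function.Embedding.injective _)]
    have e4 : B.edgeSet.ncard = 6 := by
      simp only [B]
      rw [SimpleGraph.edgeSet_map, Set.ncard_image_of_injective _ (Function.Embedding.injective _),
        ← SimpleGraph.coe_edgeFinset, Set.ncard_coe_finset,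
        SimpleGraph.card_edgeFinset_top_eq_card_choose_two]
      rfl
    have e5 : E.edgeSet.ncard ≤ 1 := by
      simp only [E]
      refine (Set.ncard_le_ncard (t := {s(Sum.inl w, Sum.inr 0)}) ?_ (Set.finite_singleton _)).trans (by simp)
      simp [SimpleGraph.edge]
    omega

lemma good_base {n : ℕ} (f : Fin (n + 1) → Fin (n + 1) → Bool)
    (hs : ∀ a b, f a b = f b a) (hir : ∀ a, f a a = false)
    (h0 : ∀ a, 0 ≠ a → f 0 a = true)
    (hk : ∀ v, ∃ a b c, f v a ∧ f v b ∧ f v c ∧ f a b ∧ f b c ∧ f a c)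
    (he : 2 * (∑ a, ∑ b, if f a b then 1 else 0) ≤ 7 * (n + 1) + 3) : Good (n + 1) (Fin (n + 1)) := by
  classical
  let H : SimpleGraph (Fin (n + 1)) :=
    { Adj := fun a b => f a b = true
      symm := ⟨fun a b h => by rw [hs]; exact h⟩
      loopless := ⟨fun a h => by simp [hir] at h⟩ }
  refine ⟨H, ?_, hk, ?_⟩
  · rw [SimpleGraph.connected_iff_exists_forall_reachable]
    refine ⟨0, fun a => ?_⟩
    by_cases h : 0 = a
    · rw [h]
    · exact SimpleGraph.Adj.reachable (G := H) (h0 a h)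
  · have h1 := ee_univ (G := H)
    rw [ee_eq] at h1
    unfold dg at h1
    simp only [Finset.card_filter] at h1
    have h2 : (∑ a, ∑ b, if H.Adj a b then 1 else 0) = ∑ a, ∑ b, if f a b then 1 else 0 := rfl
    have h3 : (∑ a, ∑ b, if H.Adj a b then 1 else 0) = 2 * H.edgeSet.ncard := by
      rw [← h1]
      congr! 3
    omega

lemma good_all (n : ℕ) : Good (n + 4) (Fin (n + 4)) := by
  induction n using Nat.strong_induction_on with
  | _ n ih =>
    rcases Nat.lt_or_ge n 4 with h | h
    · interval_cases n
      · exact good_base (n := 3) (fun a b => decide (a ≠ b)) (by decide) (by decide) (by decide)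
          (by decide) (by decide)
      · exact good_base (n := 4) (fun a b => decide (a ≠ b ∧ ¬ (3 ≤ a ∧ 3 ≤ b)))
          (by decide) (by decide) (by decide) (by decide) (by decide)
      · exact good_base (n := 5) (fun a b => decide (a ≠ b ∧
            (a ≤ 1 ∨ b ≤ 1 ∨ (a ≤ 3 ∧ b ≤ 3) ∨ (4 ≤ a ∧ 4 ≤ b))))
          (by decide) (by decide) (by decide) (by decide) (by decide)
      · exact good_base (n := 6) (fun a b => decide (a ≠ b ∧
            (a = 0 ∨ b = 0 ∨ (a ≤ 3 ∧ b ≤ 3) ∨ (4 ≤ a ∧ 4 ≤ b))))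
          (by decide) (by decide) (by decide) (by decide) (by decide)
    · obtain ⟨k, rfl⟩ := Nat.exists_eq_add_of_le' h
      exact (ih k (by omega)).step.equiv finSumFinEquiv

end
end LNF

theorem stmt_17 {V : Type*} [Fintype V] (G : SimpleGraph V) (n : ℕ)
    (hn : Fintype.card V = n) (h8 : 8 ≤ n)
    (hconn : G.Connected) (hloc : LocallyNonforesty G)
    -- `G` has minimum size among connected locally nonforesty graphs of order `n`
    (hmin : ∀ H : SimpleGraph (Fin n), H.Connected → LocallyNonforesty H →
      G.edgeSet.ncard ≤ H.edgeSet.ncard) :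
    -- there is at most one block whose order is 5 or 6
    {B : Set V | IsBlock G B ∧ (B.ncard = 5 ∨ B.ncard = 6)}.Subsingleton := by
  classical
  intro B1 hB1 B2 hB2
  by_contra hne
  have hb : ∀ B : Set V, IsBlock G B ∧ (B.ncard = 5 ∨ B.ncard = 6) → LNF.Blk G B.toFinset := by
    intro B hB
    apply LNF.blk_of_block
    · simpa using hB.1
    · rw [← Set.ncard_eq_toFinset_card']; exact hB.2
  have hcu : LNF.Conn G Finset.univ := by
    intro S hS ⟨s, hs⟩ hneq
    obtain ⟨t, htS⟩ : ∃ b, b ∉ S := by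
      by_contra hcon
      push Not at hcon
      exact hneq (Finset.eq_univ_iff_forall.2 hcon)
    obtain ⟨p⟩ := hconn.preconnected s t
    obtain ⟨d, -, h1, h2⟩ := p.exists_boundary_dart {a | a ∈ S} hs htS
    exact ⟨d.fst, h1, d.snd, Finset.mem_univ _, h2, d.adj⟩
  have hneu : (Finset.univ : Finset V).Nonempty := by
    rw [← Finset.card_pos, Finset.card_univ]; omega
  have key := LNF.main (G := G) (Finset.univ : Finset V).card Finset.univ le_rfl hneu hcu
    {B1.toFinset, B2.toFinset} (by
      intro B hB
      simp only [Finset.mem_insert, Finset.mem_singleton] at hB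
      rcases hB with rfl | rfl
      · exact ⟨hb _ hB1, Finset.subset_univ _⟩
      · exact ⟨hb _ hB2, Finset.subset_univ _⟩)
  rw [Finset.card_pair (by simpa using hne)] at key
  have hun : LNF.un G Finset.univ = 0 := by
    unfold LNF.un
    rw [Finset.card_eq_zero, Finset.filter_eq_empty_iff]
    intro v _ h
    exact h (LNF.sat_of (hloc v))
  unfold LNF.Psi at key
  rw [hun, LNF.ee_univ, Finset.card_univ, hn] at key
  obtain ⟨k, rfl⟩ := Nat.exists_eq_add_of_le' (show 4 ≤ n by omega)
  obtain ⟨H, h1, h2, h3⟩ := LNF.good_all k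
  have := hmin H h1 h2.lnf
  push_cast at key
  omega
end
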